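/- Let n ≥ 5, p ≥ 1 and n/(n−4) < s < (n+4)/(n−4). Let U = (u_1, …, u_p) be a nonnegative superharmonic C⁴ solution of Δ² u_i = |U|^{s−1} u_i on the punctured unit ball B₁ \ {0} ⊂ ℝ^n. If |U(x)| = o(|x|^{−4/(s−1)}) as x → 0 (i.e., lim_{x→0} |x|^{4/(s−1)} |U(x)| = 0), then the origin is a removable singularity: U extends to a continuous function on all of B₁. -/

import Mathlib

open MeasureTheory Metric Filter Topology

/-- The Euclidean Laplacian: sum of second partial derivatives. -/
noncomputable def lap {n : ℕ} (u : EuclideanSpace ℝ (Fin n) → ℝ)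
    (x : EuclideanSpace ℝ (Fin n)) : ℝ :=
  ∑ i : Fin n,
    fderiv ℝ (fun y => fderiv ℝ u y (EuclideanSpace.single i 1)) x
      (EuclideanSpace.single i 1)

/-- The bi-Laplacian Δ² = Δ ∘ Δ. -/
noncomputable def bilap {n : ℕ} (u : EuclideanSpace ℝ (Fin n) → ℝ) :
    EuclideanSpace ℝ (Fin n) → ℝ :=
  lap (lap u)

/-- The pointwise Euclidean norm |U(x)| of a p-map U. -/
noncomputable def vnorm {n p : ℕ} (U : Fin p → EuclideanSpace ℝ (Fin n) → ℝ)
    (x : EuclideanSpace ℝ (Fin n)) : ℝ :=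
  Real.sqrt (∑ i, U i x ^ 2)

/-!
A comparison principle for the norms of vector-valued functions holds by touching from above with
superharmonic barriers, also for weakly coupled systems and across small singular sets. Applied to
`u - u ∘ T`, where `T` is the reflection exchanging two points, it bounds `u x - u y` in terms of
`sup ‖u‖` and `sup ‖Δ u‖`, even on a punctured ball. On a full ball the same estimate for `Δ u`,
combined with a doubling argument, bounds `Δ u` by `u` and `Δ² u`.

If `U = o(‖x‖ ^ (-4 / (s - 1)))`, then `‖Δ² U‖ = o(‖x‖ ^ (-4)) * ‖U‖`, a perturbation of `Δ² U = 0`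
that the pair of powers `‖x‖ ^ c`, `‖x‖ ^ (c - 2)` dominates for every `4 - n < c < 0`. Since
`s > n / (n - 4)` means `4 / (s - 1) < n - 4`, the singularity of `(U, Δ U)` is weak enough for
comparison with such pairs. Choosing `c = -1 / s` gives `Δ² U = O(‖x‖⁻¹)`, so `Δ U` and then `U` are
bounded, and the reflection estimate makes `U` Cauchy at the origin.
-/

open Laplacian InnerProductSpace Module Asymptotics

section Laplacian

variable {E F : Type*} [NormedAddCommGroup E] [InnerProductSpace ℝ E] [FiniteDimensional ℝ E]
  [NormedAddCommGroup F] [NormedSpace ℝ F]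

theorem laplacian_eq_sum_fderiv {ι : Type*} [Fintype ι] (b : OrthonormalBasis ι ℝ E) (f : E → F)
    (x : E) : Δ f x = ∑ i, fderiv ℝ (fderiv ℝ f) x (b i) (b i) := by
  simp [laplacian_eq_iteratedFDeriv_orthonormalBasis f b, iteratedFDeriv_two_apply]

theorem contDiffAt_laplacian {f : E → F} {x : E} {m n : WithTop ℕ∞} (hf : ContDiffAt ℝ n f x)
    (hmn : m + 2 ≤ n) : ContDiffAt ℝ m (Δ f) x := by
  rw [show Δ f = fun y => ∑ i, fderiv ℝ (fderiv ℝ f) y (stdOrthonormalBasis ℝ E i)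
    (stdOrthonormalBasis ℝ E i) from funext (laplacian_eq_sum_fderiv _ f)]
  have h : ContDiffAt ℝ m (fderiv ℝ (fderiv ℝ f)) x :=
    (hf.fderiv_right (m := m + 1) (by rwa [add_assoc, one_add_one_eq_two])).fderiv_right le_rfl
  exact ContDiffAt.sum fun i _ => (h.clm_apply contDiffAt_const).clm_apply contDiffAt_const

theorem laplacian_comp_affineIsometryEquiv {E' : Type*} [NormedAddCommGroup E']
    [InnerProductSpace ℝ E'] [FiniteDimensional ℝ E'] (T : E ≃ᵃⁱ[ℝ] E') (f : E' → F) (x : E) :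
    Δ (fun y => f (T y)) x = Δ f (T x) := by
  let L : E ≃ₗᵢ[ℝ] E' := T.linearIsometryEquiv
  let b := stdOrthonormalBasis ℝ E
  have hT (y : E) : T y = L y + T 0 := by simpa using T.map_vadd 0 y
  have hiter : iteratedFDeriv ℝ 2 (fun y => f (T y)) x =
      (iteratedFDeriv ℝ 2 f (T x)).compContinuousLinearMap
        fun _ => (L.toContinuousLinearEquiv : E →L[ℝ] E') := by
    have h := L.toContinuousLinearEquiv.iteratedFDerivWithin_comp_right (fun z => f (z + T 0))
      uniqueDiffOn_univ (Set.mem_univ (L x)) 2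
    simp only [Set.preimage_univ, iteratedFDerivWithin_univ, iteratedFDeriv_comp_add_right] at h
    rw [show (fun y => f (T y)) = fun y => f (L y + T 0) by simp only [← hT], hT x]
    exact h
  simp only [laplacian_eq_iteratedFDeriv_orthonormalBasis _ b,
    laplacian_eq_iteratedFDeriv_orthonormalBasis _ (b.map L), hiter]
  refine Finset.sum_congr rfl fun i _ => ?_
  rw [ContinuousMultilinearMap.compContinuousLinearMap_apply]
  congr 1
  funext j
  fin_cases j <;> rfl

theorem laplacian_eq_trace {f : E → ℝ} {g : E → E} {g' : E →L[ℝ] E} {x : E}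
    (hf : ∀ᶠ y in 𝓝 x, HasFDerivAt f (innerSL ℝ (g y)) y) (hg : HasFDerivAt g g' x) :
    Δ f x = LinearMap.trace ℝ E g' := by
  let b := stdOrthonormalBasis ℝ E
  have hhess := (innerSL ℝ : E →L[ℝ] E →L[ℝ] ℝ).hasFDerivAt.comp x hg
  have hgrad : fderiv ℝ f =ᶠ[𝓝 x] (innerSL ℝ : E →L[ℝ] E →L[ℝ] ℝ) ∘ g :=
    hf.mono fun y hy => hy.fderiv
  rw [laplacian_eq_sum_fderiv b, hgrad.fderiv_eq, hhess.fderiv, LinearMap.trace_eq_sum_inner _ b]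
  exact Finset.sum_congr rfl fun i _ => real_inner_comm _ _

omit [FiniteDimensional ℝ E] in
theorem hasFDerivAt_norm_rpow_of_ne_zero (c : ℝ) {x : E} (hx : x ≠ 0) :
    HasFDerivAt (fun y : E => ‖y‖ ^ c) ((c * ‖x‖ ^ (c - 2)) • innerSL ℝ x) x := by
  have hpow (y : E) (d : ℝ) : (‖y‖ ^ 2) ^ (d / 2) = ‖y‖ ^ d := by
    rw [← Real.rpow_natCast_mul (norm_nonneg y)]; congr 1; push_cast; ring
  have h := (hasStrictFDerivAt_norm_sq x).hasFDerivAt.rpow_const (p := c / 2)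
    (Or.inl (by positivity))
  simp only [show c / 2 - 1 = (c - 2) / 2 by ring, hpow] at h
  refine h.congr_fderiv ?_
  ext v
  simp only [smul_apply, coe_innerSL_apply, nsmul_eq_mul, Nat.cast_ofNat, smul_eq_mul]
  ring

omit [FiniteDimensional ℝ E] in
theorem contDiffAt_norm_rpow (c : ℝ) {x : E} (hx : x ≠ 0) {m : WithTop ℕ∞} :
    ContDiffAt ℝ m (fun y : E => ‖y‖ ^ c) x :=
  (contDiffAt_norm ℝ hx).rpow_const_of_ne (norm_ne_zero_iff.2 hx)

theorem laplacian_norm_rpow (c : ℝ) {x : E} (hx : x ≠ 0) :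
    Δ (fun y : E => ‖y‖ ^ c) x = c * (c + finrank ℝ E - 2) * ‖x‖ ^ (c - 2) := by
  have hgrad : ∀ᶠ y in 𝓝 x,
      HasFDerivAt (fun y : E => ‖y‖ ^ c) (innerSL ℝ ((c * ‖y‖ ^ (c - 2)) • y)) y := by
    filter_upwards [isOpen_ne.mem_nhds hx] with y hy
    simpa using hasFDerivAt_norm_rpow_of_ne_zero c hy
  have hhess := ((hasFDerivAt_norm_rpow_of_ne_zero (c - 2) hx).const_mul c).smul (hasFDerivAt_id x)
  have hpow : ‖x‖ ^ (c - 2 - 2) * ‖x‖ ^ 2 = ‖x‖ ^ (c - 2) := by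
    rw [← Real.rpow_add_natCast (norm_ne_zero_iff.2 hx)]; congr 1; push_cast; ring
  have htrace : Δ (fun y : E => ‖y‖ ^ c) x =
      c * ‖x‖ ^ (c - 2) * finrank ℝ E + c * ((c - 2) * ‖x‖ ^ (c - 2 - 2)) * ‖x‖ ^ 2 := by
    simpa [LinearMap.trace_id, mul_assoc] using laplacian_eq_trace hgrad hhess
  rw [htrace, ← hpow]
  ring

theorem laplacian_norm_sq (x : E) : Δ (fun y : E => ‖y‖ ^ 2) x = 2 * finrank ℝ E := by
  have hgrad : ∀ᶠ y in 𝓝 x, HasFDerivAt (fun y : E => ‖y‖ ^ 2) (innerSL ℝ ((2 : ℝ) • y)) y :=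
    .of_forall fun y => (hasStrictFDerivAt_norm_sq y).hasFDerivAt.congr_fderiv (by simp [two_smul])
  rw [laplacian_eq_trace hgrad ((hasFDerivAt_id x).const_smul (2 : ℝ))]
  simp [LinearMap.trace_id]

theorem laplacian_quadratic_inner_sub (a b : ℝ) (e m x : E) :
    Δ (fun y : E => a * ⟪e, y - m⟫_ℝ + b * ⟪e, y - m⟫_ℝ ^ 2) x = 2 * b * ‖e‖ ^ 2 := by
  have hinner (y : E) : HasFDerivAt (fun y : E => ⟪e, y - m⟫_ℝ) (innerSL ℝ e) y :=
    (innerSL ℝ e).hasFDerivAt.comp y ((hasFDerivAt_id y).sub_const m)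
  have hgrad : ∀ᶠ y in 𝓝 x, HasFDerivAt (fun y : E => a * ⟪e, y - m⟫_ℝ + b * ⟪e, y - m⟫_ℝ ^ 2)
      (innerSL ℝ ((a + 2 * b * ⟪e, y - m⟫_ℝ) • e)) y := by
    refine .of_forall fun y => (((hinner y).const_mul a).add
      (((hinner y).pow 2).const_mul b)).congr_fderiv ?_
    ext v
    simp only [Nat.add_one_sub_one, pow_one, nsmul_eq_mul, Nat.cast_ofNat, add_apply, smul_apply,
      coe_innerSL_apply, smul_eq_mul, map_smul]
    ring
  rw [laplacian_eq_trace hgrad ((((hinner x).const_mul (2 * b)).const_add a).smul_const e)]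
  simp

end Laplacian

theorem deriv_deriv_nonpos_of_isLocalMax {g : ℝ → ℝ} {a : ℝ} (hmax : IsLocalMax g a)
    (hg : ContinuousAt g a) : deriv (deriv g) a ≤ 0 := by
  by_contra! hpos
  have hmin : IsLocalMin g a := isLocalMin_of_deriv_deriv_pos hpos hmax.deriv_eq_zero hg
  have hconst : g =ᶠ[𝓝 a] fun _ => g a := by
    filter_upwards [hmax, hmin] with t hle hge using le_antisymm hle hge
  exact hpos.ne' (by simpa using hconst.deriv.deriv_eq)

section MaximumPrinciple

variable {E F : Type*} [NormedAddCommGroup E] [NormedAddCommGroup F]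

theorem fderiv_fderiv_nonpos_of_isLocalMax [NormedSpace ℝ E] {f : E → ℝ} {x : E}
    (hf : ContDiffAt ℝ 2 f x) (hmax : IsLocalMax f x) (v : E) :
    fderiv ℝ (fderiv ℝ f) x v v ≤ 0 := by
  let l : ℝ → E := fun t => x + t • v
  have hl (t : ℝ) : HasDerivAt l v t :=
    (((hasDerivAt_id t).smul_const v).const_add x).congr_deriv (one_smul ℝ v)
  have hl0 : l 0 = x := by simp [l]
  have htendsto : Tendsto l (𝓝 0) (𝓝 x) := hl0 ▸ (hl 0).continuousAt
  have hderiv : deriv (f ∘ l) =ᶠ[𝓝 0] fun t => fderiv ℝ f (l t) v := by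
    filter_upwards [htendsto.eventually (hf.eventually (by simp))] with t ht
    exact ((ht.differentiableAt two_ne_zero).hasFDerivAt.comp_hasDerivAt t (hl t)).deriv
  have hdiff : HasFDerivAt (fderiv ℝ f) (fderiv ℝ (fderiv ℝ f) x) (l 0) :=
    hl0 ▸ ((hf.fderiv_right (m := 1) le_rfl).differentiableAt one_ne_zero).hasFDerivAt
  have hderiv2 : HasDerivAt (fun t => fderiv ℝ f (l t) v) (fderiv ℝ (fderiv ℝ f) x v v) 0 := by
    simpa using (hdiff.comp_hasDerivAt 0 (hl 0)).clm_apply (hasDerivAt_const (0 : ℝ) v)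
  rw [← hderiv2.deriv, ← hderiv.deriv_eq]
  refine deriv_deriv_nonpos_of_isLocalMax ?_ ?_
  · simpa only [IsLocalMax, IsMaxFilter, Function.comp_def, hl0] using htendsto.eventually hmax
  · exact ContinuousAt.comp (hl0 ▸ hf.continuousAt) (hl 0).continuousAt

variable [InnerProductSpace ℝ E] [FiniteDimensional ℝ E]

theorem laplacian_nonpos_of_isLocalMax {f : E → ℝ} {x : E} (hf : ContDiffAt ℝ 2 f x)
    (hmax : IsLocalMax f x) : Δ f x ≤ 0 := by
  rw [laplacian_eq_sum_fderiv (stdOrthonormalBasis ℝ E)]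
  exact Finset.sum_nonpos fun i _ => fderiv_fderiv_nonpos_of_isLocalMax hf hmax _

variable [NormedSpace ℝ F]

theorem neg_laplacian_le_norm_laplacian_of_touching {u : E → F} {φ : E → ℝ} {x : E}
    (hu : ContDiffAt ℝ 2 u x) (hφ : ContDiffAt ℝ 2 φ x) (hle : ∀ᶠ y in 𝓝 x, ‖u y‖ ≤ φ y)
    (heq : ‖u x‖ = φ x) : -Δ φ x ≤ ‖Δ u x‖ := by
  obtain ⟨g, hg, hgx⟩ := exists_dual_vector'' ℝ (u x)
  have hbound (v : F) : g v ≤ ‖v‖ :=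
    (Real.le_norm_self _).trans ((g.le_of_opNorm_le hg v).trans_eq (one_mul _))
  have hmax : IsLocalMax (g ∘ u - φ) x := by
    filter_upwards [hle] with y hy
    have hgx : g (u x) = ‖u x‖ := hgx
    simpa [hgx, heq] using (hbound (u y)).trans hy
  have hgu : ContDiffAt ℝ 2 (g ∘ u) x := g.contDiff.contDiffAt.comp x hu
  have hlap : Δ (g ∘ u - φ) x ≤ 0 := laplacian_nonpos_of_isLocalMax (hgu.sub hφ) hmax
  rw [hgu.laplacian_sub hφ, hu.laplacian_CLM_comp_left] at hlap
  have hneg : -g (Δ u x) ≤ ‖Δ u x‖ := by simpa using hbound (-Δ u x)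
  simp only [Function.comp_apply] at hlap
  linarith

end MaximumPrinciple

section Comparison

variable {E F ι : Type*} [NormedAddCommGroup E] [InnerProductSpace ℝ E] [FiniteDimensional ℝ E]
  [NormedAddCommGroup F] [NormedSpace ℝ F] [Fintype ι] {u : ι → E → F} {φ χ : ι → E → ℝ}
  {m : ι → ι → E → ℝ} {K S X : Set E}

omit [NormedSpace ℝ F] [InnerProductSpace ℝ E] [FiniteDimensional ℝ E] [Fintype ι] in
theorem exists_norm_eq_mul_and_forall_norm_le_mul [Finite ι] (hK : IsCompact K)
    (hu : ∀ i, ContinuousOn (u i) K) (hφ : ∀ i, ContinuousOn (φ i) K)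
    (hpos : ∀ i, ∀ x ∈ K, 0 < φ i x) {i₀ : ι} {x₀ : E} (hx₀ : x₀ ∈ K)
    (hlt : φ i₀ x₀ < ‖u i₀ x₀‖) :
    ∃ θ : ℝ, 1 < θ ∧ (∃ i, ∃ x ∈ K, ‖u i x‖ = θ * φ i x) ∧
      ∀ i, ∀ x ∈ K, ‖u i x‖ ≤ θ * φ i x := by
  choose z hzK hz using fun i => hK.exists_isMaxOn ⟨x₀, hx₀⟩
    ((hu i).norm.div (hφ i) fun x hx => (hpos i x hx).ne')
  have : Nonempty ι := ⟨i₀⟩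
  obtain ⟨i, hi⟩ := Finite.exists_max fun i => ‖u i (z i)‖ / φ i (z i)
  have hmax (j : ι) (x : E) (hx : x ∈ K) : ‖u j x‖ / φ j x ≤ ‖u i (z i)‖ / φ i (z i) :=
    (hz j hx).trans (hi j)
  refine ⟨‖u i (z i)‖ / φ i (z i), ?_, ⟨i, z i, hzK i, ?_⟩, fun j x hx => ?_⟩
  · exact ((one_lt_div (hpos i₀ x₀ hx₀)).2 hlt).trans_le (hmax i₀ x₀ hx₀)
  · exact (div_mul_cancel₀ _ (hpos i _ (hzK i)).ne').symm
  · exact (div_le_iff₀ (hpos j x hx)).1 (hmax j x hx)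

omit [NormedSpace ℝ F] [InnerProductSpace ℝ E] [FiniteDimensional ℝ E] [Fintype ι] in
theorem exists_norm_le_mul_of_isCompact [Finite ι] (hK : IsCompact K)
    (hu : ∀ i, ContinuousOn (u i) K) (hφ : ∀ i, ContinuousOn (φ i) K)
    (hpos : ∀ i, ∀ x ∈ K, 0 < φ i x) : ∃ A : ℝ, 0 ≤ A ∧ ∀ i, ∀ x ∈ K, ‖u i x‖ ≤ A * φ i x := by
  choose C hC using fun i => hK.bddAbove_image
    ((hu i).norm.div (hφ i) fun x hx => (hpos i x hx).ne')
  obtain ⟨A, hA⟩ := Finite.exists_le C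
  refine ⟨max A 0, le_max_right _ _, fun i x hx => (div_le_iff₀ (hpos i x hx)).1 ?_⟩
  exact (hC i (Set.mem_image_of_mem _ hx)).trans ((hA i).trans (le_max_left _ _))

/- For the least `θ > 1` with `‖u j‖ ≤ θ * φ j` for all `j`, some `θ * φ k` touches `‖u k‖`; there
`‖Δ (u k)‖ ≤ -Δ (φ k) + (θ - 1) * ∑ j, m k j * φ j < -θ * Δ (φ k)`, against touching. -/
theorem norm_le_of_strict_barrier (hK : IsCompact K) (hKX : K ⊆ X)
    (hm : ∀ i j, ∀ x ∈ X, 0 ≤ m i j x)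
    (hu : ∀ i, ∀ x ∈ X, ContDiffAt ℝ 2 (u i) x) (hφ : ∀ i, ∀ x ∈ X, ContDiffAt ℝ 2 (φ i) x)
    (hpos : ∀ i, ∀ x ∈ X, 0 < φ i x)
    (hΔu : ∀ i, ∀ x ∈ X, ‖Δ (u i) x‖ ≤
      -Δ (φ i) x + ∑ j, m i j x * (‖u j x‖ - φ j x))
    (hΔφ : ∀ i, ∀ x ∈ X, ∑ j, m i j x * φ j x < -Δ (φ i) x)
    (hout : ∀ i, ∀ x ∈ X, x ∉ K ∩ interior X → ‖u i x‖ ≤ φ i x) (i : ι) {x : E} (hx : x ∈ X) :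
    ‖u i x‖ ≤ φ i x := by
  by_contra! hlt
  have hxK : x ∈ K := by_contra fun h => hlt.not_ge (hout i x hx fun h' => h h'.1)
  obtain ⟨θ, hθ, ⟨k, z, hzK, hz⟩, hle⟩ := exists_norm_eq_mul_and_forall_norm_le_mul hK
    (fun i y hy => (hu i y (hKX hy)).continuousAt.continuousWithinAt)
    (fun i y hy => (hφ i y (hKX hy)).continuousAt.continuousWithinAt)
    (fun i y hy => hpos i y (hKX hy)) hxK hlt
  have hleX (j : ι) (y : E) (hy : y ∈ X) : ‖u j y‖ ≤ θ * φ j y := by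
    by_cases hyK : y ∈ K
    · exact hle j y hyK
    · exact (hout j y hy fun h => hyK h.1).trans (le_mul_of_one_le_left (hpos j y hy).le hθ.le)
  have hzX : z ∈ X := hKX hzK
  have hz_int : X ∈ 𝓝 z := by
    rw [← mem_interior_iff_mem_nhds]
    by_contra h
    refine (hout k z hzX fun h' => h h'.2).not_gt ?_
    rw [hz]
    exact lt_mul_of_one_lt_left (hpos k z hzX) hθ
  have htouch : -Δ (θ • φ k) z ≤ ‖Δ (u k) z‖ :=
    neg_laplacian_le_norm_laplacian_of_touching (hu k z hzX) ((hφ k z hzX).const_smul θ)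
      (by filter_upwards [hz_int] with y hy using hleX k y hy) hz
  rw [laplacian_smul θ (hφ k z hzX), smul_eq_mul] at htouch
  have hcouple : ∑ j, m k j z * ‖u j z‖ ≤ θ * ∑ j, m k j z * φ j z := by
    rw [Finset.mul_sum]
    refine Finset.sum_le_sum fun j _ => ?_
    rw [mul_left_comm]
    exact mul_le_mul_of_nonneg_left (hle j z hzK) (hm k j z hzX)
  have hΔuk := hΔu k z hzX
  simp only [mul_sub, Finset.sum_sub_distrib] at hΔuk
  linarith [mul_lt_mul_of_pos_left (hΔφ k z hzX) (sub_pos.2 hθ)]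

/- Near the singular set `S` the multiples `κ • χ` dominate `u` and make the barrier strict, for
every `κ > 0`. -/
theorem norm_le_of_barrier_of_isLittleO (hK : IsCompact K) (hS : IsClosed S)
    (hm : ∀ i j, ∀ x ∈ K \ S, 0 ≤ m i j x)
    (hu : ∀ i, ∀ x ∈ K \ S, ContDiffAt ℝ 2 (u i) x)
    (hφ : ∀ i, ∀ x ∈ K \ S, ContDiffAt ℝ 2 (φ i) x) (hφ₀ : ∀ i, ∀ x ∈ K \ S, 0 ≤ φ i x)
    (hχ : ∀ i, ∀ x ∈ K \ S, ContDiffAt ℝ 2 (χ i) x) (hχ₀ : ∀ i, ∀ x ∈ K \ S, 0 < χ i x)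
    (hΔu : ∀ i, ∀ x ∈ K \ S, ‖Δ (u i) x‖ ≤
      -Δ (φ i) x + ∑ j, m i j x * (‖u j x‖ - φ j x))
    (hΔφ : ∀ i, ∀ x ∈ K \ S, ∑ j, m i j x * φ j x ≤ -Δ (φ i) x)
    (hΔχ : ∀ i, ∀ x ∈ K \ S, ∑ j, m i j x * χ j x < -Δ (χ i) x)
    (hpole : ∀ i, u i =o[𝓝ˢ S ⊓ 𝓟 (K \ S)] χ i)
    (hbdry : ∀ i, ∀ x ∈ K \ S, x ∉ interior K → ‖u i x‖ ≤ φ i x) (i : ι) {x : E}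
    (hx : x ∈ K \ S) : ‖u i x‖ ≤ φ i x := by
  have hint : interior (K \ S) = interior K \ S := by
    rw [Set.sdiff_eq, interior_inter, hS.isOpen_compl.interior_eq, Set.sdiff_eq]
  have hperturbed (κ : ℝ) (hκ : 0 < κ) : ‖u i x‖ ≤ (φ i + κ • χ i) x := by
    have hnear : ∀ᶠ y in 𝓝ˢ S, y ∈ K \ S → ∀ i, ‖u i y‖ ≤ κ * χ i y := by
      refine eventually_inf_principal.1 (eventually_all.2 fun j => ?_)
      filter_upwards [(hpole j).bound hκ, mem_inf_of_right (mem_principal_self _)] with y hy hyK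
      rwa [Real.norm_of_nonneg (hχ₀ j y hyK).le] at hy
    obtain ⟨V, hVo, hSV, hV⟩ := mem_nhdsSet_iff_exists.1 hnear
    have hκχ (j : ι) (y : E) (hy : y ∈ K \ S) : ContDiffAt ℝ 2 (κ • χ j) y :=
      (hχ j y hy).const_smul κ
    have hΔψ (j : ι) (y : E) (hy : y ∈ K \ S) :
        Δ (φ j + κ • χ j) y = Δ (φ j) y + κ * Δ (χ j) y := by
      rw [(hφ j y hy).laplacian_add (hκχ j y hy), laplacian_smul κ (hχ j y hy), smul_eq_mul]
    have hsum (j : ι) (y : E) : ∑ k, m j k y * (φ k + κ • χ k) y =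
        ∑ k, m j k y * φ k y + κ * ∑ k, m j k y * χ k y := by
      simp only [Pi.add_apply, Pi.smul_apply, smul_eq_mul, mul_add, Finset.sum_add_distrib,
        Finset.mul_sum, mul_left_comm κ]
    refine norm_le_of_strict_barrier (φ := fun j => φ j + κ • χ j) (hK.diff hVo)
      (Set.sdiff_subset_sdiff_right hSV) hm hu (fun j y hy => (hφ j y hy).add (hκχ j y hy))
      (fun j y hy => add_pos_of_nonneg_of_pos (hφ₀ j y hy) (mul_pos hκ (hχ₀ j y hy)))
      (fun j y hy => ?_) (fun j y hy => ?_) (fun j y hy hyn => ?_) i hx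
    · have hΔuj := hΔu j y hy
      simp only [mul_sub, Finset.sum_sub_distrib, hsum] at hΔuj ⊢
      rw [hΔψ j y hy]
      linarith [mul_lt_mul_of_pos_left (hΔχ j y hy) hκ]
    · rw [hΔψ j y hy, hsum]
      linarith [hΔφ j y hy, mul_lt_mul_of_pos_left (hΔχ j y hy) hκ]
    · by_cases hyV : y ∈ V
      · exact (hV hyV hy j).trans (le_add_of_nonneg_left (hφ₀ j y hy))
      · refine (hbdry j y hy fun h => hyn ⟨⟨hy.1, hyV⟩, hint ▸ ⟨h, hy.2⟩⟩).trans ?_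
        exact le_add_of_nonneg_right (mul_nonneg hκ.le (hχ₀ j y hy).le)
  have hlim : Tendsto (fun κ : ℝ => (φ i + κ • χ i) x) (𝓝[>] 0) (𝓝 (φ i x)) := by
    have hcont : Continuous fun κ : ℝ => φ i x + κ * χ i x := by fun_prop
    simpa using (hcont.tendsto 0).mono_left nhdsWithin_le_nhds
  exact ge_of_tendsto hlim (eventually_nhdsWithin_of_forall hperturbed)

theorem norm_le_of_superharmonic_barrier {w : E → F} {φ χ : E → ℝ} (hK : IsCompact K)
    (hS : IsClosed S) (hw : ∀ x ∈ K \ S, ContDiffAt ℝ 2 w x)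
    (hφ : ∀ x ∈ K \ S, ContDiffAt ℝ 2 φ x) (hφ₀ : ∀ x ∈ K \ S, 0 ≤ φ x)
    (hχ : ∀ x ∈ K \ S, ContDiffAt ℝ 2 χ x) (hχ₀ : ∀ x ∈ K \ S, 0 < χ x)
    (hΔw : ∀ x ∈ K \ S, ‖Δ w x‖ ≤ -Δ φ x) (hΔχ : ∀ x ∈ K \ S, Δ χ x < 0)
    (hpole : w =o[𝓝ˢ S ⊓ 𝓟 (K \ S)] χ)
    (hbdry : ∀ x ∈ K \ S, x ∉ interior K → ‖w x‖ ≤ φ x) {x : E} (hx : x ∈ K \ S) :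
    ‖w x‖ ≤ φ x :=
  norm_le_of_barrier_of_isLittleO (ι := Unit) (u := fun _ => w) (φ := fun _ => φ)
    (χ := fun _ => χ) (m := 0) hK hS (by simp) (fun _ => hw) (fun _ => hφ) (fun _ => hφ₀)
    (fun _ => hχ) (fun _ => hχ₀) (by simpa using hΔw)
    (fun _ x hx => by simpa using (norm_nonneg _).trans (hΔw x hx)) (by simpa using hΔχ)
    (fun _ => hpole) (fun _ => hbdry) () hx

end Comparison

section Reflection

variable {E F : Type*} [NormedAddCommGroup E] [InnerProductSpace ℝ E] [FiniteDimensional ℝ E]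
  [NormedAddCommGroup F] [NormedSpace ℝ F]

omit [FiniteDimensional ℝ E] in
theorem contDiff_affineIsometryEquiv (T : E ≃ᵃⁱ[ℝ] E) {m : WithTop ℕ∞} : ContDiff ℝ m T := by
  have hT : (T : E → E) = fun z => T.linearIsometryEquiv z + T 0 :=
    funext fun z => by simpa using T.map_vadd 0 z
  rw [hT]
  exact T.linearIsometryEquiv.contDiff.add contDiff_const

theorem exists_affineIsometryEquiv_swap (x y : E) :
    ∃ T : E ≃ᵃⁱ[ℝ] E, T x = y ∧ ∀ z, ⟪x - y, z - midpoint ℝ x y⟫_ℝ = 0 → T z = z := by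
  have hmid := AffineSubspace.midpoint_mem_perpBisector x y
  have : Nonempty (AffineSubspace.perpBisector x y) := ⟨⟨_, hmid⟩⟩
  refine ⟨EuclideanGeometry.reflection (AffineSubspace.perpBisector x y), ?_, fun z hz => ?_⟩
  · have hperp : x - midpoint ℝ x y ∈ (AffineSubspace.perpBisector x y).directionᗮ := by
      rw [AffineSubspace.direction_perpBisector, Submodule.orthogonal_orthogonal,
        left_sub_midpoint, vsub_eq_sub, ← neg_sub y x, smul_neg]
      exact neg_mem (Submodule.smul_mem _ _ (Submodule.mem_span_singleton_self _))
    have h := EuclideanGeometry.reflection_orthogonal_vadd hmid hperp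
    rw [vadd_eq_add, vadd_eq_add, sub_add_cancel] at h
    rw [h, midpoint_eq_smul_add, invOf_eq_inv]
    module
  · rw [EuclideanGeometry.reflection_eq_self_iff,
      AffineSubspace.mem_perpBisector_iff_inner_eq_zero, vsub_eq_sub, vsub_eq_sub, ← neg_sub x y,
      inner_neg_right, real_inner_comm, hz, neg_zero]

theorem laplacian_norm_sq_add_comp (T : E ≃ᵃⁱ[ℝ] E) (z : E) :
    Δ (fun z => ‖z‖ ^ 2 + ‖T z‖ ^ 2) z = 4 * finrank ℝ E := by
  have hsq {z : E} : ContDiffAt ℝ 2 (fun z : E => ‖z‖ ^ 2) z := (contDiff_norm_sq ℝ).contDiffAt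
  refine (hsq.laplacian_add (hsq.comp z (contDiff_affineIsometryEquiv T).contDiffAt)).trans ?_
  rw [Function.comp_def, laplacian_comp_affineIsometryEquiv T fun z => ‖z‖ ^ 2]
  simp only [laplacian_norm_sq]
  ring

theorem laplacian_norm_rpow_neg {c : ℝ} (hc : c < 0) (hc' : 2 - finrank ℝ E < c) {z : E}
    (hz : z ≠ 0) : Δ (fun z : E => ‖z‖ ^ c) z < 0 := by
  rw [laplacian_norm_rpow c hz]
  have := norm_pos_iff.2 hz
  exact mul_neg_of_neg_of_pos (mul_neg_of_neg_of_pos hc (by linarith)) (by positivity)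

theorem laplacian_norm_rpow_add_comp_neg (T : E ≃ᵃⁱ[ℝ] E) {c : ℝ} (hc : c < 0)
    (hc' : 2 - finrank ℝ E < c) {z : E} (hz : z ≠ 0) (hTz : T z ≠ 0) :
    Δ (fun z => ‖z‖ ^ c + ‖T z‖ ^ c) z < 0 := by
  have hadd := (contDiffAt_norm_rpow c hz).laplacian_add
    ((contDiffAt_norm_rpow c hTz).comp z (contDiff_affineIsometryEquiv T).contDiffAt)
  rw [Function.comp_def, laplacian_comp_affineIsometryEquiv T fun z => ‖z‖ ^ c] at hadd
  exact hadd.trans_lt (add_neg (laplacian_norm_rpow_neg hc hc' hz)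
    (laplacian_norm_rpow_neg hc hc' hTz))

omit [InnerProductSpace ℝ E] [FiniteDimensional ℝ E] in
theorem tendsto_norm_rpow_atTop {c : ℝ} (hc : c < 0) :
    Tendsto (fun x : E => ‖x‖ ^ c) (𝓝[≠] 0) atTop :=
  (tendsto_rpow_neg_nhdsGT_zero hc).comp tendsto_norm_nhdsNE_zero

omit [InnerProductSpace ℝ E] [FiniteDimensional ℝ E] in
theorem tendsto_norm_rpow_add_comp_atTop [NormedSpace ℝ E] (T : E ≃ᵃⁱ[ℝ] E) {c : ℝ} (hc : c < 0) :
    Tendsto (fun z => ‖z‖ ^ c + ‖T z‖ ^ c) (𝓝ˢ {0, T.symm 0} ⊓ 𝓟 {0, T.symm 0}ᶜ) atTop := by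
  rw [nhdsSet_insert, nhdsSet_singleton, inf_sup_right, tendsto_sup]
  constructor
  · have hle : 𝓝 0 ⊓ 𝓟 {0, T.symm 0}ᶜ ≤ 𝓝[≠] (0 : E) :=
      inf_le_inf_left _ (principal_mono.2 fun z hz h => hz (.inl h))
    exact tendsto_atTop_mono (fun z => le_add_of_nonneg_right (by positivity))
      ((tendsto_norm_rpow_atTop hc).mono_left hle)
  · have hT : Tendsto T (𝓝 (T.symm 0) ⊓ 𝓟 {0, T.symm 0}ᶜ) (𝓝[≠] 0) := by
      refine tendsto_nhdsWithin_of_tendsto_nhds_of_eventually_within _ ?_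
        (mem_inf_of_right fun z hz h => hz (.inr (T.eq_symm_apply.2 h)))
      simpa using (T.continuous.tendsto (T.symm 0)).mono_left inf_le_left
    exact tendsto_atTop_mono (fun z => le_add_of_nonneg_left (by positivity))
      ((tendsto_norm_rpow_atTop hc).comp hT)

omit [InnerProductSpace ℝ E] [FiniteDimensional ℝ E] [NormedSpace ℝ F] in
theorem isLittleO_norm_rpow_add_comp [NormedSpace ℝ E] (T : E ≃ᵃⁱ[ℝ] E) {c : ℝ} (hc : c < 0)
    {K : Set E} {w : E → F} {M : ℝ} (hw : ∀ z ∈ K \ {0, T.symm 0}, ‖w z‖ ≤ M) :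
    w =o[𝓝ˢ {0, T.symm 0} ⊓ 𝓟 (K \ {0, T.symm 0})] fun z => ‖z‖ ^ c + ‖T z‖ ^ c := by
  have hpole := (tendsto_norm_rpow_add_comp_atTop T hc).mono_left
    (inf_le_inf_left _ (principal_mono.2 fun z (hz : z ∈ K \ {0, T.symm 0}) => hz.2))
  refine (IsBigO.of_bound M ?_).trans_isLittleO
    ((isLittleO_one_left_iff ℝ).2 (tendsto_norm_atTop_atTop.comp hpole))
  filter_upwards [mem_inf_of_right (mem_principal_self _)] with z hz
  rw [norm_one, mul_one]
  exact hw z hz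

theorem laplacian_sub_comp_affineIsometryEquiv (T : E ≃ᵃⁱ[ℝ] E) {u : E → F} {z : E}
    (hz : ContDiffAt ℝ 2 u z) (hTz : ContDiffAt ℝ 2 u (T z)) :
    Δ (fun z => u z - u (T z)) z = Δ u z - Δ u (T z) := by
  rw [← laplacian_comp_affineIsometryEquiv T u]
  exact hz.laplacian_sub (hTz.comp z (contDiff_affineIsometryEquiv T).contDiffAt)

/-- The part of the lens `‖z‖ ≤ r`, `‖T z‖ ≤ r` in the half-space `0 ≤ ⟪e, z - p⟫`; the comparison
principle is applied on it to `u - u ∘ T`. -/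
def halfLens (T : E ≃ᵃⁱ[ℝ] E) (e p : E) (r : ℝ) : Set E :=
  {z | 0 ≤ ⟪e, z - p⟫_ℝ} ∩ ({z | ‖z‖ ≤ r} ∩ {z | ‖T z‖ ≤ r})

theorem isCompact_halfLens (T : E ≃ᵃⁱ[ℝ] E) (e p : E) (r : ℝ) : IsCompact (halfLens T e p r) :=
  (isCompact_closedBall (0 : E) r).of_isClosed_subset
    ((isClosed_le continuous_const (by fun_prop)).inter
      ((isClosed_le continuous_norm continuous_const).inter
        (isClosed_le T.continuous.norm continuous_const)))
    fun _ hz => mem_closedBall_zero_iff.2 hz.2.1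

omit [FiniteDimensional ℝ E] in
theorem inner_eq_zero_or_norm_eq_of_notMem_interior_halfLens {T : E ≃ᵃⁱ[ℝ] E} {e p z : E} {r : ℝ}
    (hz : z ∈ halfLens T e p r) (hz' : z ∉ interior (halfLens T e p r)) :
    ⟪e, z - p⟫_ℝ = 0 ∨ ‖z‖ = r ∨ ‖T z‖ = r := by
  have hTc := T.continuous
  rw [halfLens, interior_inter, interior_inter, Set.mem_inter_iff, Set.mem_inter_iff, not_and_or,
    not_and_or] at hz'
  refine hz'.imp (fun h => Eq.symm ?_) (Or.imp (fun h => ?_) fun h => ?_)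
  · have hd : Continuous fun z => ⟪e, z - p⟫_ℝ := by fun_prop
    exact frontier_le_subset_eq continuous_const hd ⟨subset_closure hz.1, h⟩
  · exact frontier_le_subset_eq continuous_norm continuous_const ⟨subset_closure hz.2.1, h⟩
  · exact frontier_le_subset_eq hTc.norm continuous_const ⟨subset_closure hz.2.2, h⟩

/-- The barrier for `u - u ∘ T` on `halfLens T e p r`: it grows linearly in the distance
`⟪e, z - p⟫` to the hyperplane fixed by `T`, up to an error quadratic in `‖z‖` and `‖T z‖`. -/
noncomputable def reflectionBarrier (T : E ≃ᵃⁱ[ℝ] E) (e p : E) (r L N : ℝ) (z : E) : ℝ :=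
  2 * L * r * ⟪e, z - p⟫_ℝ + -L * ⟪e, z - p⟫_ℝ ^ 2 + N * (‖z‖ ^ 2 + ‖T z‖ ^ 2)

section Barrier

variable (T : E ≃ᵃⁱ[ℝ] E) {e p z : E} {r L N : ℝ}

omit [FiniteDimensional ℝ E] in
theorem contDiff_reflectionBarrier : ContDiff ℝ 2 (reflectionBarrier T e p r L N) := by
  have hT := contDiff_affineIsometryEquiv T (m := 2)
  have hd : ContDiff ℝ 2 fun z => ⟪e, z - p⟫_ℝ :=
    contDiff_const.inner ℝ (contDiff_id.sub contDiff_const)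
  exact ((contDiff_const.mul hd).add (contDiff_const.mul (hd.pow 2))).add
    (contDiff_const.mul ((contDiff_norm_sq ℝ).add ((contDiff_norm_sq ℝ).comp hT)))

theorem laplacian_reflectionBarrier (he : ‖e‖ = 1) :
    Δ (reflectionBarrier T e p r L N) z = -2 * L + 4 * finrank ℝ E * N := by
  have hT := contDiff_affineIsometryEquiv T (m := 2)
  have hd : ContDiff ℝ 2 fun z => ⟪e, z - p⟫_ℝ :=
    contDiff_const.inner ℝ (contDiff_id.sub contDiff_const)
  have hsq : ContDiff ℝ 2 fun z => ‖z‖ ^ 2 + ‖T z‖ ^ 2 :=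
    (contDiff_norm_sq ℝ).add ((contDiff_norm_sq ℝ).comp hT)
  have hquad : ContDiff ℝ 2 fun z => 2 * L * r * ⟪e, z - p⟫_ℝ + -L * ⟪e, z - p⟫_ℝ ^ 2 :=
    (contDiff_const.mul hd).add (contDiff_const.mul (hd.pow 2))
  have hadd : Δ (reflectionBarrier T e p r L N) z = _ + Δ (N • fun z => ‖z‖ ^ 2 + ‖T z‖ ^ 2) z :=
    hquad.contDiffAt.laplacian_add (hsq.contDiffAt.const_smul N)
  rw [hadd, laplacian_quadratic_inner_sub, laplacian_smul N hsq.contDiffAt,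
    laplacian_norm_sq_add_comp, he, smul_eq_mul]
  ring

omit [FiniteDimensional ℝ E] in
theorem mul_norm_sq_add_le_reflectionBarrier (he : ‖e‖ = 1) (hp : ‖p‖ ≤ r) (hL : 0 ≤ L)
    (hz : z ∈ halfLens T e p r) :
    N * (‖z‖ ^ 2 + ‖T z‖ ^ 2) ≤ reflectionBarrier T e p r L N z := by
  have hle : ⟪e, z - p⟫_ℝ ≤ 2 * r := calc
    ⟪e, z - p⟫_ℝ ≤ ‖e‖ * ‖z - p‖ := real_inner_le_norm _ _
    _ ≤ ‖z‖ + ‖p‖ := by rw [he, one_mul]; exact norm_sub_le _ _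
    _ ≤ 2 * r := by linarith [hz.2.1.out]
  have : 0 ≤ L * ⟪e, z - p⟫_ℝ * (2 * r - ⟪e, z - p⟫_ℝ) :=
    mul_nonneg (mul_nonneg hL hz.1) (sub_nonneg.2 hle)
  rw [reflectionBarrier]
  linarith

omit [FiniteDimensional ℝ E] in
theorem mul_sq_le_reflectionBarrier (he : ‖e‖ = 1) (hp : ‖p‖ ≤ r) (hL : 0 ≤ L) (hN : 0 ≤ N)
    (hz : z ∈ halfLens T e p r) (hr : ‖z‖ = r ∨ ‖T z‖ = r) :
    N * r ^ 2 ≤ reflectionBarrier T e p r L N z := by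
  refine le_trans (mul_le_mul_of_nonneg_left ?_ hN)
    (mul_norm_sq_add_le_reflectionBarrier T he hp hL hz)
  rcases hr with rfl | rfl
  exacts [le_add_of_nonneg_right (sq_nonneg _), le_add_of_nonneg_left (sq_nonneg _)]

end Barrier

theorem norm_sub_comp_affineIsometryEquiv_le (hE : 2 < finrank ℝ E) {u : E → F} {r A M : ℝ}
    (hr : 0 < r) (hu : ∀ z ∈ closedBall 0 r \ {0}, ContDiffAt ℝ 2 u z)
    (hM : ∀ z ∈ closedBall 0 r \ {0}, ‖u z‖ ≤ M) (hA : ∀ z ∈ closedBall 0 r \ {0}, ‖Δ u z‖ ≤ A)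
    (T : E ≃ᵃⁱ[ℝ] E) {e p : E} (he : ‖e‖ = 1) (hp : ‖p‖ ≤ r)
    (hT : ∀ z, ⟪e, z - p⟫_ℝ = 0 → T z = z) {x : E} (hx : x ∈ halfLens T e p r \ {0, T.symm 0}) :
    ‖u x - u (T x)‖ ≤
      reflectionBarrier T e p r (A + 4 * finrank ℝ E * M / r ^ 2) (2 * M / r ^ 2) x := by
  have hK₁ (z : E) (hz : z ∈ halfLens T e p r \ {0, T.symm 0}) : z ∈ closedBall 0 r \ {0} :=
    ⟨mem_closedBall_zero_iff.2 hz.1.2.1, fun h => hz.2 (.inl h)⟩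
  have hK₂ (z : E) (hz : z ∈ halfLens T e p r \ {0, T.symm 0}) : T z ∈ closedBall 0 r \ {0} :=
    ⟨mem_closedBall_zero_iff.2 hz.1.2.2, fun h => hz.2 (.inr (T.eq_symm_apply.2 h))⟩
  have hM₀ : 0 ≤ M := (norm_nonneg _).trans (hM x (hK₁ x hx))
  have hA₀ : 0 ≤ A := (norm_nonneg _).trans (hA x (hK₁ x hx))
  have hT' {z : E} : ContDiffAt ℝ 2 T z := (contDiff_affineIsometryEquiv T).contDiffAt
  have hw (z : E) (hz : z ∈ halfLens T e p r \ {0, T.symm 0}) : ‖u z - u (T z)‖ ≤ 2 * M :=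
    (norm_sub_le _ _).trans (by linarith [hM _ (hK₁ z hz), hM _ (hK₂ z hz)])
  have hφ (z : E) (hz : z ∈ halfLens T e p r \ {0, T.symm 0}) : 0 ≤
      reflectionBarrier T e p r (A + 4 * finrank ℝ E * M / r ^ 2) (2 * M / r ^ 2) z :=
    le_trans (by positivity)
      (mul_norm_sq_add_le_reflectionBarrier T he hp (by positivity) hz.1)
  refine norm_le_of_superharmonic_barrier (w := fun z => u z - u (T z))
    (χ := fun z => ‖z‖ ^ (-1 / 2 : ℝ) + ‖T z‖ ^ (-1 / 2 : ℝ)) (isCompact_halfLens T e p r)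
    (Set.toFinite {0, T.symm 0}).isClosed
    (fun z hz => (hu z (hK₁ z hz)).sub ((hu _ (hK₂ z hz)).comp z hT'))
    (fun z _ => (contDiff_reflectionBarrier T).contDiffAt)
    hφ
    (fun z hz => (contDiffAt_norm_rpow _ (hK₁ z hz).2).add
      ((contDiffAt_norm_rpow _ (hK₂ z hz).2).comp z hT'))
    (fun z hz => ?_) (fun z hz => ?_) (fun z hz => ?_) ?_ (fun z hz hzi => ?_) hx
  · have := norm_pos_iff.2 (hK₁ z hz).2
    positivity
  · rw [laplacian_sub_comp_affineIsometryEquiv T (hu z (hK₁ z hz)) (hu _ (hK₂ z hz)),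
      laplacian_reflectionBarrier T he]
    calc
      ‖Δ u z - Δ u (T z)‖ ≤ A + A :=
        (norm_sub_le _ _).trans (add_le_add (hA _ (hK₁ z hz)) (hA _ (hK₂ z hz)))
      _ = _ := by ring
  · have : (3 : ℝ) ≤ finrank ℝ E := by exact_mod_cast hE
    exact laplacian_norm_rpow_add_comp_neg T (by norm_num) (by linarith) (hK₁ z hz).2 (hK₂ z hz).2
  · exact isLittleO_norm_rpow_add_comp T (by norm_num) hw
  · rcases inner_eq_zero_or_norm_eq_of_notMem_interior_halfLens hz.1 hzi with h | h
    · rw [hT z h, sub_self, norm_zero]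
      exact hφ z hz
    · rw [← div_mul_cancel₀ (2 * M) (pow_pos hr 2).ne'] at hw
      exact (hw z hz).trans
        (mul_sq_le_reflectionBarrier T he hp (by positivity) (by positivity) hz.1 h)

theorem norm_sub_le_of_norm_laplacian_le (hE : 2 < finrank ℝ E) {u : E → F} {r A M : ℝ}
    (hu : ∀ z ∈ closedBall 0 r \ {0}, ContDiffAt ℝ 2 u z)
    (hM : ∀ z ∈ closedBall 0 r \ {0}, ‖u z‖ ≤ M) (hA : ∀ z ∈ closedBall 0 r \ {0}, ‖Δ u z‖ ≤ A)
    {x y : E} (hx : x ∈ closedBall 0 r \ {0}) (hy : y ∈ closedBall 0 r \ {0}) :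
    ‖u x - u y‖ ≤ (A + 4 * finrank ℝ E * M / r ^ 2) * r * ‖x - y‖ +
      2 * M / r ^ 2 * (‖x‖ ^ 2 + ‖y‖ ^ 2) := by
  have hM₀ : 0 ≤ M := (norm_nonneg _).trans (hM x hx)
  have hA₀ : 0 ≤ A := (norm_nonneg _).trans (hA x hx)
  have hxr := mem_closedBall_zero_iff.1 hx.1
  have hyr := mem_closedBall_zero_iff.1 hy.1
  have hr : 0 < r := (norm_pos_iff.2 hx.2).trans_le hxr
  rcases eq_or_ne x y with rfl | hxy
  · rw [sub_self, norm_zero]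
    positivity
  obtain ⟨T, rfl, hT⟩ := exists_affineIsometryEquiv_swap x y
  have hd : 0 < ‖x - T x‖ := norm_pos_iff.2 (sub_ne_zero.2 hxy)
  set e : E := ‖x - T x‖⁻¹ • (x - T x) with he
  have hex : ⟪e, x - midpoint ℝ x (T x)⟫_ℝ = ‖x - T x‖ / 2 := by
    rw [left_sub_midpoint, he, inner_smul_left, inner_smul_right, real_inner_self_eq_norm_sq]
    simp only [map_inv₀, Real.ringHom_apply, invOf_eq_inv]
    field_simp
  have hp : ‖midpoint ℝ x (T x)‖ ≤ r := mem_closedBall_zero_iff.1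
    ((convex_closedBall 0 r).midpoint_mem hx.1 hy.1)
  have h := norm_sub_comp_affineIsometryEquiv_le hE hr hu hM hA T (e := e)
    (norm_smul_inv_norm (sub_ne_zero.2 hxy)) hp
    (fun z hz => hT z (by
      rw [he, inner_smul_left] at hz
      exact (mul_eq_zero.1 hz).resolve_left (by simpa using sub_ne_zero.2 hxy)))
    ⟨⟨by rw [Set.mem_ofPred, hex]; positivity, hxr, hyr⟩,
      fun h => h.elim hx.2 fun h => hy.2 (T.eq_symm_apply.1 h)⟩
  rw [reflectionBarrier, hex] at h
  have : 0 ≤ (A + 4 * finrank ℝ E * M / r ^ 2) * (‖x - T x‖ / 2) ^ 2 := by positivity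
  linarith

end Reflection

section Interior

variable {E F : Type*} [NormedAddCommGroup E] [InnerProductSpace ℝ E] [FiniteDimensional ℝ E]
  [NormedAddCommGroup F] [NormedSpace ℝ F]

theorem norm_sub_center_le_of_norm_laplacian_le (hE : 2 < finrank ℝ E) {u : E → F} {c : E}
    {r A M : ℝ} (hu : ∀ z ∈ closedBall c r, ContDiffAt ℝ 2 u z)
    (hM : ∀ z ∈ closedBall c r, ‖u z‖ ≤ M) (hA : ∀ z ∈ closedBall c r, ‖Δ u z‖ ≤ A)
    {x : E} (hx : x ∈ closedBall c r) :
    ‖u x - u c‖ ≤ (A + 4 * finrank ℝ E * M / r ^ 2) * r * ‖x - c‖ +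
      2 * M / r ^ 2 * ‖x - c‖ ^ 2 := by
  have : Nontrivial E := nontrivial_of_finrank_pos (R := ℝ) (by omega)
  rcases eq_or_ne x c with rfl | hxc
  · simp
  have hr : 0 < r := (dist_pos.2 hxc).trans_le hx
  let T : E ≃ᵃⁱ[ℝ] E := .vaddConst ℝ c
  have hball (z : E) (hz : z ∈ closedBall 0 r \ {0}) : T z ∈ closedBall c r := by
    simpa [T, mem_closedBall_iff_norm] using hz.1
  have hx' : x - c ∈ closedBall 0 r \ {0} :=
    ⟨mem_closedBall_zero_iff.2 (mem_closedBall_iff_norm.1 hx), sub_ne_zero.2 hxc⟩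
  have hnear : ∀ᶠ y in 𝓝[≠] (0 : E), ‖u x - u (T y)‖ ≤
      (A + 4 * finrank ℝ E * M / r ^ 2) * r * ‖x - c - y‖ +
        2 * M / r ^ 2 * (‖x - c‖ ^ 2 + ‖y‖ ^ 2) := by
    filter_upwards [self_mem_nhdsWithin, mem_nhdsWithin_of_mem_nhds (closedBall_mem_nhds 0 hr)]
      with y hy hyr
    have h := norm_sub_le_of_norm_laplacian_le hE (u := fun z => u (T z))
      (fun z hz => (hu _ (hball z hz)).comp z (contDiff_affineIsometryEquiv T).contDiffAt)
      (fun z hz => hM _ (hball z hz))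
      (fun z hz => by rw [laplacian_comp_affineIsometryEquiv]; exact hA _ (hball z hz))
      hx' (y := y) ⟨hyr, hy⟩
    simpa [T] using h
  have huc : Tendsto (fun y => u (T y)) (𝓝[≠] 0) (𝓝 (u c)) := by
    have hT : Tendsto T (𝓝 0) (𝓝 c) := by simpa [T] using T.continuous.tendsto 0
    exact ((hu c (mem_closedBall_self hr.le)).continuousAt.tendsto.comp hT).mono_left
      nhdsWithin_le_nhds
  refine le_of_tendsto_of_tendsto (huc.const_sub _).norm ?_ hnear
  have hcont : Continuous fun y : E => (A + 4 * finrank ℝ E * M / r ^ 2) * r * ‖x - c - y‖ +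
      2 * M / r ^ 2 * (‖x - c‖ ^ 2 + ‖y‖ ^ 2) := by fun_prop
  simpa using (hcont.tendsto 0).mono_left nhdsWithin_le_nhds

/- Point picking: `x₁` maximizes `(R - dist x x₀) ^ 2 * ‖f x‖` and `d = R - dist x₁ x₀`. -/
omit [NormedSpace ℝ F] in
theorem exists_closedBall_norm_le_four_mul {X : Type*} [PseudoMetricSpace X] [ProperSpace X]
    {f : X → F} {x₀ : X} {R : ℝ} (hR : 0 < R) (hf : ContinuousOn f (closedBall x₀ R))
    (hx₀ : f x₀ ≠ 0) :
    ∃ x₁ d, 0 < d ∧ d ≤ R ∧ closedBall x₁ d ⊆ closedBall x₀ R ∧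
      R ^ 2 * ‖f x₀‖ ≤ d ^ 2 * ‖f x₁‖ ∧ ∀ x ∈ closedBall x₁ (d / 2), ‖f x‖ ≤ 4 * ‖f x₁‖ := by
  obtain ⟨x₁, hx₁, hmax⟩ := (isCompact_closedBall x₀ R).exists_isMaxOn
    (nonempty_closedBall.2 hR.le) (f := fun x => (R - dist x x₀) ^ 2 * ‖f x‖)
    (by fun_prop)
  have hle : R ^ 2 * ‖f x₀‖ ≤ (R - dist x₁ x₀) ^ 2 * ‖f x₁‖ := by
    simpa using hmax (mem_closedBall_self hR.le)
  have hd : 0 < R - dist x₁ x₀ := by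
    refine (sub_nonneg.2 hx₁).lt_of_ne' fun h => ?_
    rw [h, zero_pow two_ne_zero, zero_mul] at hle
    have := norm_pos_iff.2 hx₀
    exact hle.not_gt (by positivity)
  have hsub : closedBall x₁ (R - dist x₁ x₀) ⊆ closedBall x₀ R :=
    closedBall_subset_closedBall' (by linarith)
  refine ⟨x₁, R - dist x₁ x₀, hd, sub_le_self _ dist_nonneg, hsub, hle, fun x hx => ?_⟩
  have hxd : (R - dist x₁ x₀) / 2 ≤ R - dist x x₀ := by
    linarith [dist_triangle x x₁ x₀, mem_closedBall.1 hx]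
  have h : ((R - dist x₁ x₀) / 2) ^ 2 * ‖f x‖ ≤ (R - dist x₁ x₀) ^ 2 * ‖f x₁‖ :=
    (by gcongr : _ ≤ (R - dist x x₀) ^ 2 * ‖f x‖).trans
      (hmax (hsub (closedBall_subset_closedBall (by linarith) hx)))
  rw [div_pow, div_mul_eq_mul_div, div_le_iff₀ (by norm_num), mul_assoc] at h
  linarith [le_of_mul_le_mul_left h (pow_pos hd 2)]

theorem exists_laplacian_le {g : E → ℝ} {c : E} {t M : ℝ} (ht : 0 < t)
    (hg : ∀ x ∈ closedBall c t, ContDiffAt ℝ 2 g x) (hM : ∀ x ∈ closedBall c t, |g x| ≤ M) :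
    ∃ x ∈ closedBall c t, Δ g x ≤ 4 * finrank ℝ E * M / t ^ 2 := by
  let q : E → ℝ := fun x => ‖x - c‖ ^ 2
  let k : ℝ := 2 * M / t ^ 2
  have hq : ContDiff ℝ 2 q := (contDiff_norm_sq ℝ).comp (contDiff_id.sub contDiff_const)
  have hkq : ContDiff ℝ 2 (k • q) := hq.const_smul k
  have hΔq (x : E) : Δ q x = 2 * finrank ℝ E := by
    have h := laplacian_comp_affineIsometryEquiv (AffineIsometryEquiv.vaddConst ℝ c).symm
      (fun y : E => ‖y‖ ^ 2) x
    rwa [laplacian_norm_sq] at h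
  have hmax_interior {x : E} (hx : x ∈ ball c t)
      (hmax : IsMaxOn (g - k • q) (closedBall c t) x) :
      Δ g x ≤ 4 * finrank ℝ E * M / t ^ 2 := by
    have hgx := hg x (ball_subset_closedBall hx)
    have h : Δ (g - k • q) x ≤ 0 := laplacian_nonpos_of_isLocalMax (hgx.sub hkq.contDiffAt)
      (hmax.isLocalMax (closedBall_mem_nhds_of_mem hx))
    rw [hgx.laplacian_sub hkq.contDiffAt, laplacian_smul _ hq.contDiffAt, hΔq,
      smul_eq_mul] at h
    linarith [show 4 * finrank ℝ E * M / t ^ 2 = k * (2 * finrank ℝ E) by ring]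
  obtain ⟨x, hx, hmax⟩ := (isCompact_closedBall c t).exists_isMaxOn (nonempty_closedBall.2 ht.le)
    (f := g - k • q) <| .sub (fun x hx => (hg x hx).continuousAt.continuousWithinAt)
      hkq.continuous.continuousOn
  have hc := mem_closedBall_self (x := c) ht.le
  rcases (mem_closedBall.1 hx).lt_or_eq with hlt | heq
  · exact ⟨x, hx, hmax_interior hlt hmax⟩
  · refine ⟨c, hc, hmax_interior (mem_ball_self ht) <| isMaxOn_iff.2 fun y hy =>
      (isMaxOn_iff.1 hmax y hy).trans ?_⟩
    have hqx : k * ‖x - c‖ ^ 2 = 2 * M := by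
      rw [← dist_eq_norm, heq, div_mul_cancel₀ _ (by positivity)]
    have h : g x - 2 * M ≤ g c := by
      linarith [le_of_abs_le (hM x hx), neg_le_of_abs_le (hM c hc)]
    simpa [q, hqx] using h

theorem norm_sub_center_le_on_small_ball (hE : 2 < finrank ℝ E) {u : E → F} {c : E} {r A M : ℝ}
    (hr : 0 < r) (hu : ∀ z ∈ closedBall c r, ContDiffAt ℝ 2 u z)
    (hM : ∀ z ∈ closedBall c r, ‖u z‖ ≤ M) (hA : ∀ z ∈ closedBall c r, ‖Δ u z‖ ≤ A)
    {x : E} (hx : x ∈ closedBall c (r / (64 * finrank ℝ E))) :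
    ‖u x - u c‖ ≤ A * r ^ 2 + M / 8 := by
  have hc := mem_closedBall_self (x := c) hr.le
  have hM₀ : 0 ≤ M := (norm_nonneg _).trans (hM c hc)
  have hA₀ : 0 ≤ A := (norm_nonneg _).trans (hA c hc)
  have hn : (1 : ℝ) ≤ finrank ℝ E := by exact_mod_cast (by omega : 1 ≤ finrank ℝ E)
  set n : ℝ := (finrank ℝ E : ℝ)
  have hxc : ‖x - c‖ ≤ r / (64 * n) := mem_closedBall_iff_norm.1 hx
  have hsmall : r / (64 * n) ≤ r / 64 := by gcongr; linarith
  have hxr : x ∈ closedBall c r := mem_closedBall_iff_norm.2 (by linarith)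
  calc
    ‖u x - u c‖ ≤ (A + 4 * n * M / r ^ 2) * r * ‖x - c‖ + 2 * M / r ^ 2 * ‖x - c‖ ^ 2 :=
      norm_sub_center_le_of_norm_laplacian_le hE hu hM hA hxr
    _ = A * (r * ‖x - c‖) + 4 * n * M / r ^ 2 * (r * ‖x - c‖) +
        2 * M / r ^ 2 * ‖x - c‖ ^ 2 := by ring
    _ ≤ A * (r * r) + 4 * n * M / r ^ 2 * (r * (r / (64 * n))) + 2 * M / r ^ 2 * (r / 64) ^ 2 := by
      gcongr <;> linarith
    _ ≤ A * r ^ 2 + M / 8 := by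
      field_simp
      linarith

theorem sq_mul_norm_laplacian_le (hE : 2 < finrank ℝ E) {u : E → F} {c : E} {t M G : ℝ}
    (ht : 0 < t) (hu : ∀ x ∈ closedBall c t, ContDiffAt ℝ 4 u x)
    (hM : ∀ x ∈ closedBall c t, ‖u x‖ ≤ M) (hG : ∀ x ∈ closedBall c t, ‖Δ (Δ u) x‖ ≤ G)
    (hfour : ∀ x ∈ closedBall c t, ‖Δ u x‖ ≤ 4 * ‖Δ u c‖) :
    t ^ 2 * ‖Δ u c‖ ≤ 2 ^ 15 * finrank ℝ E ^ 3 * M + 2 * G * t ^ 4 := by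
  have hn : (1 : ℝ) ≤ finrank ℝ E := by exact_mod_cast (by omega : 1 ≤ finrank ℝ E)
  have hη : 0 < t / (64 * finrank ℝ E) := by positivity
  have hsub : closedBall c (t / (64 * finrank ℝ E)) ⊆ closedBall c t :=
    closedBall_subset_closedBall (div_le_self ht.le (by linarith))
  obtain ⟨ℓ, hℓ, hℓc⟩ := exists_dual_vector'' ℝ (Δ u c)
  have hℓle (v : F) : |ℓ v| ≤ ‖v‖ := by simpa using ℓ.le_of_opNorm_le hℓ v
  have hu₂ {x : E} (hx : x ∈ closedBall c t) : ContDiffAt ℝ 2 u x :=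
    (hu x hx).of_le (by norm_num)
  obtain ⟨x, hx, hxle⟩ := exists_laplacian_le (g := ℓ ∘ u) hη
    (fun x hx => ℓ.contDiff.contDiffAt.comp x (hu₂ (hsub hx)))
    (fun x hx => (hℓle _).trans (hM x (hsub hx)))
  have hosc := norm_sub_center_le_on_small_ball hE ht
    (fun x hx => contDiffAt_laplacian (hu x hx) (by norm_num)) hfour hG hx
  have hlower : ‖Δ u c‖ / 2 - G * t ^ 2 ≤ Δ (ℓ ∘ u) x := by
    rw [(hu₂ (hsub hx)).laplacian_CLM_comp_left, Function.comp_apply]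
    have h := neg_le_of_abs_le ((hℓle _).trans hosc)
    rw [map_sub, hℓc] at h
    simp only [RCLike.ofReal_real_eq_id, id] at h
    linarith
  have h := hlower.trans hxle
  field_simp at h
  linarith

theorem norm_laplacian_le_of_norm_bilaplacian_le (hE : 2 < finrank ℝ E) {u : E → F} {x₀ : E}
    {R M G : ℝ} (hR : 0 < R) (hu : ∀ x ∈ closedBall x₀ R, ContDiffAt ℝ 4 u x)
    (hM : ∀ x ∈ closedBall x₀ R, ‖u x‖ ≤ M) (hG : ∀ x ∈ closedBall x₀ R, ‖Δ (Δ u) x‖ ≤ G) :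
    ‖Δ u x₀‖ ≤ 2 ^ 17 * finrank ℝ E ^ 3 * M / R ^ 2 + G * R ^ 2 := by
  have hx₀ := mem_closedBall_self (x := x₀) hR.le
  have hM₀ : 0 ≤ M := (norm_nonneg _).trans (hM x₀ hx₀)
  have hG₀ : 0 ≤ G := (norm_nonneg _).trans (hG x₀ hx₀)
  rcases eq_or_ne (Δ u x₀) 0 with h₀ | h₀
  · rw [h₀, norm_zero]
    positivity
  have hΔu {x : E} (hx : x ∈ closedBall x₀ R) : ContDiffAt ℝ 2 (Δ u) x :=
    contDiffAt_laplacian (hu x hx) (by norm_num)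
  obtain ⟨x₁, d, hd, hdR, hsub, hle, hfour⟩ := exists_closedBall_norm_le_four_mul hR
    (fun x hx => (hΔu hx).continuousAt.continuousWithinAt) h₀
  have hsub' : closedBall x₁ (d / 2) ⊆ closedBall x₀ R :=
    (closedBall_subset_closedBall (by linarith)).trans hsub
  have h := sq_mul_norm_laplacian_le hE (half_pos hd) (fun x hx => hu x (hsub' hx))
    (fun x hx => hM x (hsub' hx)) (fun x hx => hG x (hsub' hx)) hfour
  have hd₄ : G * d ^ 4 ≤ G * R ^ 4 := by gcongr
  have hGR : 0 ≤ G * R ^ 4 := by positivity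
  have hfinal : ‖Δ u x₀‖ * R ^ 2 ≤ 2 ^ 17 * finrank ℝ E ^ 3 * M + G * R ^ 4 := by linarith
  calc
    ‖Δ u x₀‖ ≤ (2 ^ 17 * finrank ℝ E ^ 3 * M + G * R ^ 4) / R ^ 2 :=
      (le_div_iff₀ (by positivity)).2 hfinal
    _ = 2 ^ 17 * finrank ℝ E ^ 3 * M / R ^ 2 + G * R ^ 2 := by field_simp

end Interior

section Asymptotic

variable {E F : Type*} [NormedAddCommGroup E]

theorem eventually_nhdsNE_zero_iff {P : E → Prop} :
    (∀ᶠ x in 𝓝[≠] 0, P x) ↔ ∃ r > 0, ∀ x ∈ closedBall 0 r \ {0}, P x :=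
  (nhdsWithin_hasBasis nhds_basis_closedBall _).eventually_iff

theorem isLittleO_norm_rpow_norm_rpow {a b : ℝ} (hba : b < a) :
    (fun x : E => ‖x‖ ^ a) =o[𝓝[≠] 0] fun x => ‖x‖ ^ b := by
  have h : (fun _ : E => (1 : ℝ)) =o[𝓝[≠] 0] fun x => ‖x‖ ^ (b - a) :=
    (isLittleO_one_left_iff ℝ).2
      (tendsto_norm_atTop_atTop.comp (tendsto_norm_rpow_atTop (sub_neg.2 hba)))
  refine ((isBigO_refl (fun x : E => ‖x‖ ^ a) _).mul_isLittleO h).congr' (by simp) ?_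
  filter_upwards [self_mem_nhdsWithin] with x hx
  rw [← Real.rpow_add (norm_pos_iff.2 hx), add_sub_cancel]

theorem norm_rpow_le_of_mem_closedBall {c : ℝ} (hc : c ≤ 0) {x y : E} (hx : x ≠ 0)
    (hy : y ∈ closedBall x (‖x‖ / 2)) : ‖y‖ ^ c ≤ (1 / 2) ^ c * ‖x‖ ^ c := by
  rw [← Real.mul_rpow (by norm_num) (norm_nonneg x)]
  refine Real.rpow_le_rpow_of_nonpos (by positivity) ?_ hc
  linarith [norm_sub_norm_le x y, mem_closedBall_iff_norm'.1 hy]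

theorem nhdsSet_zero_inf_principal_le (K : Set E) : 𝓝ˢ {(0 : E)} ⊓ 𝓟 (K \ {0}) ≤ 𝓝[≠] 0 := by
  rw [nhdsSet_singleton]
  exact inf_le_inf_left _ (principal_mono.2 fun x hx => hx.2)

theorem norm_eq_of_notMem_interior_closedBall {r : ℝ} {x : E} (hx : x ∈ closedBall 0 r)
    (hx' : x ∉ interior (closedBall 0 r)) : ‖x‖ = r :=
  mem_sphere_zero_iff_norm.1 (frontier_closedBall_subset_sphere ⟨subset_closure hx, hx'⟩)

theorem sphere_subset_closedBall_sdiff {r : ℝ} (hr : 0 < r) :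
    sphere (0 : E) r ⊆ closedBall 0 r \ {0} := fun _ hx =>
  ⟨sphere_subset_closedBall hx, ne_of_mem_sphere hx hr.ne'⟩

variable [InnerProductSpace ℝ E] [FiniteDimensional ℝ E] [NormedAddCommGroup F] [NormedSpace ℝ F]

omit [InnerProductSpace ℝ E] [FiniteDimensional ℝ E] [NormedSpace ℝ F] in
theorem isBigO_norm_rpow_mul_norm {u : E → F} {a : ℝ} (huO : u =O[𝓝[≠] 0] fun x => ‖x‖ ^ a)
    (b : ℝ) : (fun x => ‖x‖ ^ b * ‖u x‖) =O[𝓝[≠] 0] fun x => ‖x‖ ^ (b + a) := by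
  refine ((isBigO_refl (fun x : E => ‖x‖ ^ b) _).mul huO.norm_left).congr' .rfl ?_
  filter_upwards [self_mem_nhdsWithin] with x hx
  rw [← Real.rpow_add (norm_pos_iff.2 hx)]

theorem isBigO_laplacian_of_isBigO_bilaplacian (hE : 2 < finrank ℝ E) {u : E → F} {c : ℝ}
    (hc : c ≤ 0) (hu : ∀ᶠ x in 𝓝[≠] 0, ContDiffAt ℝ 4 u x)
    (huO : u =O[𝓝[≠] 0] fun x => ‖x‖ ^ c) (hΔ : Δ (Δ u) =O[𝓝[≠] 0] fun x => ‖x‖ ^ (c - 4)) :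
    Δ u =O[𝓝[≠] 0] fun x => ‖x‖ ^ (c - 2) := by
  obtain ⟨M, hM₀, hM⟩ := huO.exists_nonneg
  obtain ⟨G, hG₀, hG⟩ := hΔ.exists_nonneg
  obtain ⟨r, hr, h⟩ := eventually_nhdsNE_zero_iff.1 (hu.and (hM.bound.and hG.bound))
  simp only [Real.norm_of_nonneg (Real.rpow_nonneg (norm_nonneg _) _)] at h
  refine .of_bound (2 ^ 19 * finrank ℝ E ^ 3 * (M * (1 / 2) ^ c) + G * (1 / 2) ^ (c - 4) / 4)
    (eventually_nhdsNE_zero_iff.2 ⟨r / 2, half_pos hr, fun x hx => ?_⟩)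
  have hx₀ : 0 < ‖x‖ := norm_pos_iff.2 hx.2
  have hxr : ‖x‖ ≤ r / 2 := mem_closedBall_zero_iff.1 hx.1
  have hball : closedBall x (‖x‖ / 2) ⊆ closedBall 0 r \ {0} := fun y hy => by
    have hyx := mem_closedBall_iff_norm'.1 hy
    refine ⟨mem_closedBall_zero_iff.2 ?_, norm_pos_iff.1 ?_⟩
    · linarith [norm_sub_norm_le y x, norm_sub_rev x y]
    · linarith [norm_sub_norm_le x y]
  have hest := norm_laplacian_le_of_norm_bilaplacian_le hE (half_pos hx₀)
    (fun y hy => (h y (hball hy)).1)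
    (fun y hy => (h y (hball hy)).2.1.trans
      (mul_le_mul_of_nonneg_left (norm_rpow_le_of_mem_closedBall hc hx.2 hy) hM₀))
    (fun y hy => (h y (hball hy)).2.2.trans
      (mul_le_mul_of_nonneg_left (norm_rpow_le_of_mem_closedBall (by linarith) hx.2 hy) hG₀))
  have hc₂ : ‖x‖ ^ (c - 2) = ‖x‖ ^ c / ‖x‖ ^ 2 := Real.rpow_sub_natCast hx₀.ne' c 2
  have hc₄ : ‖x‖ ^ (c - 4) = ‖x‖ ^ c / ‖x‖ ^ 4 := Real.rpow_sub_natCast hx₀.ne' c 4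
  rw [Real.norm_of_nonneg (by positivity), hc₂]
  refine hest.trans_eq ?_
  rw [hc₄]
  field_simp
  ring

/-- The pair of radial powers `‖x‖ ^ c` and `κ / 2 * ‖x‖ ^ (c - 2)` where
`-Δ (‖x‖ ^ c) = κ * ‖x‖ ^ (c - 2)`: a barrier for the pair `u`, `Δ u`. -/
noncomputable def powerPair (E : Type*) [NormedAddCommGroup E] [Module ℝ E] (c : ℝ) :
    Fin 2 → E → ℝ :=
  ![fun x => ‖x‖ ^ c, fun x => -(c * (c + finrank ℝ E - 2)) / 2 * ‖x‖ ^ (c - 2)]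

/-- The coefficients of the system `‖Δ u‖ ≤ ‖v‖`, `‖Δ v‖ ≤ ε * ‖x‖ ^ (-4) * ‖u‖` satisfied by
`u` and `v = Δ u`. -/
noncomputable def biharmonicCoupling (E : Type*) [NormedAddCommGroup E] (ε : ℝ) :
    Fin 2 → Fin 2 → E → ℝ :=
  ![![0, 1], ![fun x => ε * ‖x‖ ^ (-4 : ℝ), 0]]

omit [InnerProductSpace ℝ E] [FiniteDimensional ℝ E] in
theorem biharmonicCoupling_nonneg {ε : ℝ} (hε : 0 ≤ ε) (i j : Fin 2) (x : E) :
    0 ≤ biharmonicCoupling E ε i j x := by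
  have h : 0 ≤ ε * ‖x‖ ^ (-4 : ℝ) := mul_nonneg hε (by positivity)
  fin_cases i <;> fin_cases j
  exacts [le_rfl, zero_le_one, h, le_rfl]

omit [FiniteDimensional ℝ E] in
theorem contDiffAt_powerPair (c : ℝ) (i : Fin 2) {x : E} (hx : x ≠ 0) :
    ContDiffAt ℝ 2 (powerPair E c i) x := by
  fin_cases i
  exacts [contDiffAt_norm_rpow c hx, contDiffAt_const.mul (contDiffAt_norm_rpow _ hx)]

section PowerPair

variable {c : ℝ} (hc : c < 0) (hc' : 4 - finrank ℝ E < c)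
include hc hc'

omit [FiniteDimensional ℝ E] in
theorem powerPair_pos (i : Fin 2) {x : E} (hx : x ≠ 0) : 0 < powerPair E c i x := by
  have := norm_pos_iff.2 hx
  have hκ : 0 < -(c * (c + finrank ℝ E - 2)) :=
    neg_pos.2 (mul_neg_of_neg_of_pos hc (by linarith))
  fin_cases i
  · exact Real.rpow_pos_of_pos this c
  · exact mul_pos (half_pos hκ) (Real.rpow_pos_of_pos this _)

theorem eventually_coupling_mul_powerPair_lt :
    ∀ᶠ ε in 𝓝[>] (0 : ℝ), ∀ i, ∀ x : E, x ≠ 0 →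
      ∑ j, biharmonicCoupling E ε i j x * powerPair E c j x < -Δ (powerPair E c i) x := by
  set κ := -(c * (c + finrank ℝ E - 2)) with hκ
  have hκ₀ : 0 < κ := neg_pos.2 (mul_neg_of_neg_of_pos hc (by linarith))
  have hκ' : 0 < -((c - 2) * (c - 2 + finrank ℝ E - 2)) :=
    neg_pos.2 (mul_neg_of_neg_of_pos (by linarith) (by linarith))
  filter_upwards [Ioo_mem_nhdsGT (mul_pos (half_pos hκ₀) hκ')] with ε hε i x hx
  have hx₀ := norm_pos_iff.2 hx
  rw [Fin.sum_univ_two]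
  fin_cases i
  · have h : κ / 2 * ‖x‖ ^ (c - 2) < κ * ‖x‖ ^ (c - 2) := by gcongr; linarith
    simpa [biharmonicCoupling, powerPair, laplacian_norm_rpow c hx, ← hκ, ← neg_mul] using h
  · have hΔ : Δ (powerPair E c 1) x = κ / 2 * Δ (fun y : E => ‖y‖ ^ (c - 2)) x :=
      laplacian_smul (κ / 2) (contDiffAt_norm_rpow (c - 2) hx)
    have hpow : ‖x‖ ^ (-4 : ℝ) * ‖x‖ ^ c = ‖x‖ ^ (c - 2 - 2) := by
      rw [← Real.rpow_add hx₀]; congr 1; ring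
    have h : ε * ‖x‖ ^ (c - 2 - 2) <
        κ / 2 * -((c - 2) * (c - 2 + finrank ℝ E - 2)) * ‖x‖ ^ (c - 2 - 2) := by
      gcongr; exact hε.2
    rw [laplacian_norm_rpow _ hx] at hΔ
    change ε * ‖x‖ ^ (-4 : ℝ) * ‖x‖ ^ c + 0 * _ < -Δ (powerPair E c 1) x
    rw [hΔ, mul_assoc, hpow]
    linarith

end PowerPair

theorem isLittleO_powerPair {u : E → F} {a b : ℝ} (hb : b < 0) (hb' : 4 - finrank ℝ E < b)
    (hba : b < a) (huO : u =O[𝓝[≠] 0] fun x => ‖x‖ ^ a)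
    (hΔO : Δ u =O[𝓝[≠] 0] fun x => ‖x‖ ^ (a - 2)) (i : Fin 2) :
    (![u, Δ u] : Fin 2 → E → F) i =o[𝓝[≠] 0] powerPair E b i := by
  fin_cases i
  · exact huO.trans_isLittleO (isLittleO_norm_rpow_norm_rpow hba)
  · have hκ : -(b * (b + finrank ℝ E - 2)) / 2 ≠ 0 :=
      (half_pos (neg_pos.2 (mul_neg_of_neg_of_pos hb (by linarith)))).ne'
    exact hΔO.trans_isLittleO
      ((isLittleO_const_mul_right_iff hκ).2 (isLittleO_norm_rpow_norm_rpow (by linarith)))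

theorem norm_laplacian_le_sum_biharmonicCoupling {u : E → F} {ε : ℝ} {x : E}
    (h : ‖Δ (Δ u) x‖ ≤ ε * ‖(‖x‖ ^ (-4 : ℝ) * ‖u x‖)‖) (i : Fin 2) :
    ‖Δ ((![u, Δ u] : Fin 2 → E → F) i) x‖ ≤
      ∑ j, biharmonicCoupling E ε i j x * ‖(![u, Δ u] : Fin 2 → E → F) j x‖ := by
  rw [Real.norm_of_nonneg (by positivity), ← mul_assoc] at h
  rw [Fin.sum_univ_two]
  fin_cases i
  · simp [biharmonicCoupling]
  · simpa [biharmonicCoupling] using h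

theorem isBigO_powerPair_of_isLittleO_bilaplacian (hE : 2 < finrank ℝ E) {u : E → F} {a c : ℝ}
    (ha : a ≤ 0) (ha' : 4 - finrank ℝ E < a) (hc : c < 0) (hc' : 4 - finrank ℝ E < c)
    (hu : ∀ᶠ x in 𝓝[≠] 0, ContDiffAt ℝ 4 u x) (huO : u =O[𝓝[≠] 0] fun x => ‖x‖ ^ a)
    (hΔ : Δ (Δ u) =o[𝓝[≠] 0] fun x => ‖x‖ ^ (-4 : ℝ) * ‖u x‖) (i : Fin 2) :
    (![u, Δ u] : Fin 2 → E → F) i =O[𝓝[≠] 0] powerPair E c i := by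
  obtain ⟨b, hb', hba⟩ := exists_between ha'
  have hb : b < 0 := hba.trans_le ha
  obtain ⟨ε, hεφ, hεχ, hε⟩ := ((eventually_coupling_mul_powerPair_lt hc hc').and
    ((eventually_coupling_mul_powerPair_lt hb hb').and self_mem_nhdsWithin)).exists
  obtain ⟨r, hr, h⟩ := eventually_nhdsNE_zero_iff.1 (hu.and (hΔ.bound hε))
  set v : Fin 2 → E → F := ![u, Δ u]
  have hv₂ (i : Fin 2) : ∀ x ∈ closedBall 0 r \ {0}, ContDiffAt ℝ 2 (v i) x := fun x hx => by
    fin_cases i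
    exacts [(h x hx).1.of_le (by norm_num), contDiffAt_laplacian (h x hx).1 (by norm_num)]
  have hpole : Δ u =O[𝓝[≠] 0] fun x => ‖x‖ ^ (a - 2) := by
    refine isBigO_laplacian_of_isBigO_bilaplacian hE ha hu huO (hΔ.isBigO.trans ?_)
    rw [← neg_add_eq_sub]
    exact isBigO_norm_rpow_mul_norm huO (-4)
  have hsphere : sphere (0 : E) r ⊆ closedBall 0 r \ {0} := sphere_subset_closedBall_sdiff hr
  obtain ⟨A, hA₀, hA⟩ := exists_norm_le_mul_of_isCompact (isCompact_sphere (0 : E) r)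
    (fun i x hx => (hv₂ i x (hsphere hx)).continuousAt.continuousWithinAt)
    (fun i x hx => (contDiffAt_powerPair c i (hsphere hx).2).continuousAt.continuousWithinAt)
    fun i x hx => powerPair_pos hc hc' i (hsphere hx).2
  have hΔφ (i : Fin 2) (x : E) (hx : x ∈ closedBall 0 r \ {0}) :
      ∑ j, biharmonicCoupling E ε i j x * (A • powerPair E c j) x ≤ -Δ (A • powerPair E c i) x := by
    simp only [laplacian_smul A (contDiffAt_powerPair c i hx.2), Pi.smul_apply, smul_eq_mul,
      mul_left_comm _ A, ← Finset.mul_sum, ← mul_neg]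
    exact mul_le_mul_of_nonneg_left (hεφ i x hx.2).le hA₀
  refine .of_bound A (eventually_nhdsNE_zero_iff.2 ⟨r, hr, fun x hx => ?_⟩)
  rw [Real.norm_of_nonneg (powerPair_pos hc hc' i hx.2).le]
  exact norm_le_of_barrier_of_isLittleO (φ := fun i => A • powerPair E c i)
    (isCompact_closedBall 0 r) isClosed_singleton
    (fun i j x _ => biharmonicCoupling_nonneg (le_of_lt hε) i j x) hv₂
    (fun i x hx => (contDiffAt_powerPair c i hx.2).const_smul A)
    (fun i x hx => mul_nonneg hA₀ (powerPair_pos hc hc' i hx.2).le)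
    (fun i x hx => contDiffAt_powerPair b i hx.2) (fun i x hx => powerPair_pos hb hb' i hx.2)
    (fun i x hx => by
      simp only [mul_sub, Finset.sum_sub_distrib]
      linarith [hΔφ i x hx, norm_laplacian_le_sum_biharmonicCoupling (h x hx).2 i])
    hΔφ (fun i x hx => hεχ i x hx.2)
    (fun i => (isLittleO_powerPair hb hb' hba huO hpole i).mono (nhdsSet_zero_inf_principal_le _))
    (fun i x hx hxK => hA i x (mem_sphere_zero_iff_norm.2
      (norm_eq_of_notMem_interior_closedBall hx.1 hxK))) i hx

theorem laplacian_const_sub_div_mul_norm_rpow {q : ℝ} (hq : (q + 2) * (q + finrank ℝ E) ≠ 0)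
    (D C : ℝ) {x : E} (hx : x ≠ 0) :
    Δ (fun y : E => D - C / ((q + 2) * (q + finrank ℝ E)) * ‖y‖ ^ (q + 2)) x =
      -(C * ‖x‖ ^ q) := by
  set L := C / ((q + 2) * (q + finrank ℝ E))
  have hpow : ContDiffAt ℝ 2 (fun y : E => ‖y‖ ^ (q + 2)) x := contDiffAt_norm_rpow _ hx
  have hsmul : ContDiffAt ℝ 2 (L • fun y : E => ‖y‖ ^ (q + 2)) x := hpow.const_smul L
  calc Δ ((fun _ : E => D) - L • fun y : E => ‖y‖ ^ (q + 2)) x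
      = Δ (fun _ : E => D) x - L * Δ (fun y : E => ‖y‖ ^ (q + 2)) x := by
        rw [contDiffAt_const.laplacian_sub hsmul, laplacian_smul L hpow, smul_eq_mul]
    _ = -(L * ((q + 2) * (q + finrank ℝ E)) * ‖x‖ ^ q) := by
        rw [laplacian_norm_rpow _ hx, laplacian_const, Pi.zero_apply, zero_sub,
          add_sub_cancel_right, add_sub_right_comm, add_sub_cancel_right, ← mul_assoc]
    _ = -(C * ‖x‖ ^ q) := by rw [div_mul_cancel₀ _ hq]

theorem isBigO_one_of_isBigO_laplacian (hE : 2 < finrank ℝ E) {w : E → F} {c q : ℝ}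
    (hc : 2 - finrank ℝ E < c) (hq : -2 < q) (hw : ∀ᶠ x in 𝓝[≠] 0, ContDiffAt ℝ 2 w x)
    (hwO : w =O[𝓝[≠] 0] fun x => ‖x‖ ^ c) (hΔ : Δ w =O[𝓝[≠] 0] fun x => ‖x‖ ^ q) :
    w =O[𝓝[≠] 0] fun _ => (1 : ℝ) := by
  have hn : (2 : ℝ) < finrank ℝ E := mod_cast hE
  obtain ⟨b, hb', hb⟩ := exists_between (lt_min hc (sub_neg.2 hn))
  obtain ⟨hbc, hb₀⟩ := lt_min_iff.1 hb
  obtain ⟨C, hC₀, hC⟩ := hΔ.exists_nonneg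
  obtain ⟨r, hr, h⟩ := eventually_nhdsNE_zero_iff.1 (hw.and hC.bound)
  obtain ⟨M, hM⟩ := (isCompact_sphere (0 : E) r).exists_bound_of_continuousOn (f := w) fun x hx =>
    (h x (sphere_subset_closedBall_sdiff hr hx)).1.continuousAt.continuousWithinAt
  have hτ : 0 < (q + 2) * (q + finrank ℝ E) := mul_pos (by linarith) (by linarith)
  set L := C / ((q + 2) * (q + finrank ℝ E))
  set φ : E → ℝ := fun x => |M| + L * r ^ (q + 2) - L * ‖x‖ ^ (q + 2)
  have hΔφ (x : E) (hx : x ≠ 0) : -Δ φ x = C * ‖‖x‖ ^ q‖ := by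
    rw [laplacian_const_sub_div_mul_norm_rpow hτ.ne' _ _ hx, neg_neg,
      Real.norm_of_nonneg (by positivity)]
  have hφ₀ (x : E) (hx : ‖x‖ ≤ r) : 0 ≤ φ x := by
    have : L * ‖x‖ ^ (q + 2) ≤ L * r ^ (q + 2) := by gcongr; linarith
    linarith [abs_nonneg M]
  refine .of_bound (|M| + L * r ^ (q + 2)) (eventually_nhdsNE_zero_iff.2 ⟨r, hr, fun x hx => ?_⟩)
  have hwφ : ‖w x‖ ≤ φ x := norm_le_of_superharmonic_barrier (χ := fun x => ‖x‖ ^ b)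
    (isCompact_closedBall 0 r) isClosed_singleton (fun x hx => (h x hx).1)
    (fun x hx => contDiffAt_const.sub (contDiffAt_const.mul (contDiffAt_norm_rpow _ hx.2)))
    (fun x hx => hφ₀ x (mem_closedBall_zero_iff.1 hx.1)) (fun x hx => contDiffAt_norm_rpow b hx.2)
    (fun x hx => Real.rpow_pos_of_pos (norm_pos_iff.2 hx.2) _)
    (fun x hx => (h x hx).2.trans_eq (hΔφ x hx.2).symm)
    (fun x hx => laplacian_norm_rpow_neg hb₀ hb' hx.2)
    ((hwO.trans_isLittleO (isLittleO_norm_rpow_norm_rpow hbc)).mono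
      (nhdsSet_zero_inf_principal_le _))
    (fun x hx hxr => by
      have hxr := norm_eq_of_notMem_interior_closedBall hx.1 hxr
      simpa [φ, hxr] using (hM x (mem_sphere_zero_iff_norm.2 hxr)).trans (le_abs_self M)) hx
  have : 0 ≤ L * ‖x‖ ^ (q + 2) := by positivity
  rw [norm_one, mul_one]
  linarith

theorem exists_tendsto_of_isBigO_one [CompleteSpace F] (hE : 2 < finrank ℝ E) {u : E → F}
    (hu : ∀ᶠ x in 𝓝[≠] 0, ContDiffAt ℝ 2 u x) (huO : u =O[𝓝[≠] 0] fun _ => (1 : ℝ))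
    (hΔ : Δ u =O[𝓝[≠] 0] fun _ => (1 : ℝ)) : ∃ l, Tendsto u (𝓝[≠] 0) (𝓝 l) := by
  have : Nontrivial E := nontrivial_of_finrank_pos (R := ℝ) (by omega)
  obtain ⟨M, hM⟩ := huO.bound
  obtain ⟨A, hA⟩ := hΔ.bound
  obtain ⟨r, hr, h⟩ := eventually_nhdsNE_zero_iff.1 (hu.and (hM.and hA))
  simp only [norm_one, mul_one] at h
  have hbound (p : E × E) (h₁ : p.1 ∈ closedBall 0 r \ {0}) (h₂ : p.2 ∈ closedBall 0 r \ {0}) :=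
    norm_sub_le_of_norm_laplacian_le hE (fun x hx => (h x hx).1) (fun x hx => (h x hx).2.1)
      (fun x hx => (h x hx).2.2) h₁ h₂
  have hmem : ∀ᶠ x in 𝓝[≠] (0 : E), x ∈ closedBall 0 r \ {0} :=
    eventually_nhdsNE_zero_iff.2 ⟨r, hr, fun _ => id⟩
  refine cauchy_map_iff_exists_tendsto.1 (cauchy_map_iff.2 ⟨inferInstance,
    tendsto_uniformity_iff_dist_tendsto_zero.2 (squeeze_zero' (.of_forall fun _ => dist_nonneg)
      ((hmem.prod_mk hmem).mono fun p hp => dist_eq_norm (u p.1) (u p.2) ▸ hbound p hp.1 hp.2) ?_)⟩)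
  have hcont : Continuous fun p : E × E => (A + 4 * finrank ℝ E * M / r ^ 2) * r * ‖p.1 - p.2‖ +
      2 * M / r ^ 2 * (‖p.1‖ ^ 2 + ‖p.2‖ ^ 2) := by fun_prop
  have hle : 𝓝[≠] (0 : E) ×ˢ 𝓝[≠] (0 : E) ≤ 𝓝 (0, 0) :=
    nhds_prod_eq (X := E) (x := 0) (y := (0 : E)) ▸
      prod_mono nhdsWithin_le_nhds nhdsWithin_le_nhds
  simpa using (hcont.tendsto (0, 0)).mono_left hle

end Asymptotic

section Removability

variable {E F : Type*} [NormedAddCommGroup E] [NormedAddCommGroup F]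

theorem isLittleO_norm_rpow_mul_norm {u : E → F} {s : ℝ} (hs : 1 < s)
    (hu : u =o[𝓝[≠] 0] fun x => ‖x‖ ^ (-(4 / (s - 1)))) :
    (fun x => ‖u x‖ ^ s) =o[𝓝[≠] 0] fun x => ‖x‖ ^ (-4 : ℝ) * ‖u x‖ := by
  have hs₀ : 0 < s - 1 := sub_pos.2 hs
  have hpow := (hu.norm_left.rpow hs₀ (.of_forall fun x => by positivity)).mul_isBigO
    (isBigO_refl (fun x => ‖u x‖) _)
  refine hpow.congr (fun x => ?_) (fun x => ?_)
  · rw [← Real.rpow_add_one' (norm_nonneg _) (by linarith), sub_add_cancel]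
  · rw [← Real.rpow_mul (norm_nonneg x), neg_mul, div_mul_cancel₀ _ hs₀.ne']

theorem isLittleO_norm_rpow_neg {u : E → F} {γ : ℝ}
    (h : Tendsto (fun x => ‖x‖ ^ γ * ‖u x‖) (𝓝[≠] 0) (𝓝 0)) :
    u =o[𝓝[≠] 0] fun x => ‖x‖ ^ (-γ) := by
  refine (isLittleO_of_tendsto' ?_ (h.congr fun x => ?_)).of_norm_left
  · filter_upwards [self_mem_nhdsWithin] with x hx h₀
    exact absurd h₀ (Real.rpow_pos_of_pos (norm_pos_iff.2 hx) _).ne'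
  · rw [Real.rpow_neg (norm_nonneg x), div_inv_eq_mul, mul_comm]

variable [InnerProductSpace ℝ E] [FiniteDimensional ℝ E] [NormedSpace ℝ F]

theorem isBigO_one_of_isBigO_powerPair (hE : 5 ≤ finrank ℝ E) {s : ℝ} (hs : 1 < s) {u : E → F}
    (hu : ∀ᶠ x in 𝓝[≠] 0, ContDiffAt ℝ 4 u x) (hΔ : Δ (Δ u) =O[𝓝[≠] 0] fun x => ‖u x‖ ^ s)
    (hpair : ∀ i, (![u, Δ u] : Fin 2 → E → F) i =O[𝓝[≠] 0] powerPair E (-(1 / s)) i) :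
    u =O[𝓝[≠] 0] (fun _ => (1 : ℝ)) ∧ Δ u =O[𝓝[≠] 0] fun _ => (1 : ℝ) := by
  have hn : (5 : ℝ) ≤ finrank ℝ E := mod_cast hE
  have hs₀ : 0 < s := one_pos.trans hs
  have hs₁ : 1 / s < 1 := (div_lt_one hs₀).2 hs
  have hudecay : u =O[𝓝[≠] 0] fun x => ‖x‖ ^ (-(1 / s)) := hpair 0
  have hΔdecay : Δ u =O[𝓝[≠] 0] fun x => ‖x‖ ^ (-(1 / s) - 2) :=
    (hpair 1).trans (isBigO_const_mul_self _ _ _)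
  have hΔΔ : Δ (Δ u) =O[𝓝[≠] 0] fun x => ‖x‖ ^ (-1 : ℝ) := by
    refine hΔ.trans ((hudecay.norm_left.rpow hs₀.le (.of_forall fun x => by positivity)).congr_right
      fun x => ?_)
    rw [← Real.rpow_mul (norm_nonneg x), neg_mul, div_mul_cancel₀ _ hs₀.ne']
  have hΔO : Δ u =O[𝓝[≠] 0] fun _ => (1 : ℝ) :=
    isBigO_one_of_isBigO_laplacian (by omega) (by linarith) (by norm_num)
      (hu.mono fun x hx => contDiffAt_laplacian hx (by norm_num)) hΔdecay hΔΔ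
  exact ⟨isBigO_one_of_isBigO_laplacian (q := 0) (by omega) (by linarith) (by norm_num)
    (hu.mono fun x hx => hx.of_le (by norm_num)) hudecay (by simpa only [Real.rpow_zero]), hΔO⟩

theorem exists_tendsto_of_isBigO_bilaplacian [CompleteSpace F] (hE : 5 ≤ finrank ℝ E) {s : ℝ}
    (hs : (finrank ℝ E : ℝ) / (finrank ℝ E - 4) < s) {u : E → F}
    (hu : ∀ᶠ x in 𝓝[≠] 0, ContDiffAt ℝ 4 u x) (hΔ : Δ (Δ u) =O[𝓝[≠] 0] fun x => ‖u x‖ ^ s)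
    (ho : u =o[𝓝[≠] 0] fun x => ‖x‖ ^ (-(4 / (s - 1)))) :
    ∃ l, Tendsto u (𝓝[≠] 0) (𝓝 l) := by
  have hn : (5 : ℝ) ≤ finrank ℝ E := mod_cast hE
  have hn₄ : (0 : ℝ) < finrank ℝ E - 4 := by linarith
  have hs₁ : 1 < s := ((one_lt_div hn₄).2 (by linarith)).trans hs
  have hs₀ : 0 < 1 / s := one_div_pos.2 (one_pos.trans hs₁)
  have hs₂ : 1 / s < 1 := (div_lt_one (one_pos.trans hs₁)).2 hs₁
  have hγ : 4 / (s - 1) < finrank ℝ E - 4 := by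
    rw [div_lt_iff₀ hn₄] at hs
    rw [div_lt_iff₀ (sub_pos.2 hs₁)]
    linarith
  have hpair := isBigO_powerPair_of_isLittleO_bilaplacian (c := -(1 / s)) (by omega)
    (neg_nonpos.2 (div_nonneg zero_le_four (sub_pos.2 hs₁).le)) (by linarith) (neg_neg_of_pos hs₀)
    (by linarith) hu ho.isBigO (hΔ.trans_isLittleO (isLittleO_norm_rpow_mul_norm hs₁ ho))
  obtain ⟨huO, hΔO⟩ := isBigO_one_of_isBigO_powerPair hE hs₁ hu hΔ hpair
  exact exists_tendsto_of_isBigO_one (by omega) (hu.mono fun x hx => hx.of_le (by norm_num)) huO hΔO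

end Removability

section Coordinates

variable {n p : ℕ}

theorem lap_eq_laplacian {f : EuclideanSpace ℝ (Fin n) → ℝ} {x : EuclideanSpace ℝ (Fin n)}
    (hf : ContDiffAt ℝ 2 f x) : lap f x = Δ f x := by
  have hf' : DifferentiableAt ℝ (fderiv ℝ f) x :=
    (hf.fderiv_right (m := 1) (by norm_num)).differentiableAt one_ne_zero
  rw [lap, laplacian_eq_sum_fderiv (EuclideanSpace.basisFun (Fin n) ℝ)]
  refine Finset.sum_congr rfl fun i _ => ?_
  rw [fderiv_clm_apply hf' (differentiableAt_const _)]
  simp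

theorem laplacian_laplacian_clm_comp {E F G : Type*} [NormedAddCommGroup E] [InnerProductSpace ℝ E]
    [FiniteDimensional ℝ E] [NormedAddCommGroup F] [NormedSpace ℝ F] [NormedAddCommGroup G]
    [NormedSpace ℝ G] {f : E → F} {x : E} (hf : ContDiffAt ℝ 4 f x) (l : F →L[ℝ] G) :
    Δ (Δ (l ∘ f)) x = l (Δ (Δ f) x) := by
  have h := laplacian_congr_nhds
    ((hf.of_le (by norm_num : (2 : WithTop ℕ∞) ≤ 4)).laplacian_CLM_comp_left_nhds (l := l))
  exact h.self_of_nhds.trans (contDiffAt_laplacian hf (by norm_num)).laplacian_CLM_comp_left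

theorem bilap_eq_laplacian_laplacian {f : EuclideanSpace ℝ (Fin n) → ℝ}
    {x : EuclideanSpace ℝ (Fin n)} (hf : ContDiffAt ℝ 4 f x) : bilap f x = Δ (Δ f) x := by
  have h : lap f =ᶠ[𝓝 x] Δ f := (hf.eventually (by simp)).mono fun y hy =>
    lap_eq_laplacian (hy.of_le (by norm_num))
  have hlap : ContDiffAt ℝ 2 (lap f) x :=
    (contDiffAt_laplacian hf (by norm_num)).congr_of_eventuallyEq h
  exact (lap_eq_laplacian hlap).trans (laplacian_congr_nhds h).self_of_nhds

theorem vnorm_eq_norm (U : Fin p → EuclideanSpace ℝ (Fin n) → ℝ) (x : EuclideanSpace ℝ (Fin n)) :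
    vnorm U x = ‖WithLp.toLp 2 fun i => U i x‖ := by
  simp [vnorm, EuclideanSpace.norm_eq]

theorem laplacian_laplacian_toLp_eq_smul {U : Fin p → EuclideanSpace ℝ (Fin n) → ℝ} {c : ℝ}
    {x : EuclideanSpace ℝ (Fin n)} (hU : ∀ i, ContDiffAt ℝ 4 (U i) x)
    (h : ∀ i, bilap (U i) x = c * U i x) :
    Δ (Δ fun y => WithLp.toLp 2 fun i => U i y) x = c • WithLp.toLp 2 fun i => U i x := by
  ext i
  have hV : ContDiffAt ℝ 4 (fun y => WithLp.toLp 2 fun i => U i y) x := contDiffAt_euclidean.2 hU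
  have hcoord := laplacian_laplacian_clm_comp hV (EuclideanSpace.proj i : _ →L[ℝ] ℝ)
  exact hcoord.symm.trans ((bilap_eq_laplacian_laplacian (hU i)).symm.trans (h i))

theorem norm_laplacian_laplacian_toLp {U : Fin p → EuclideanSpace ℝ (Fin n) → ℝ} {s : ℝ}
    (hs : s ≠ 0) {x : EuclideanSpace ℝ (Fin n)} (hU : ∀ i, ContDiffAt ℝ 4 (U i) x)
    (h : ∀ i, bilap (U i) x = vnorm U x ^ (s - 1) * U i x) :
    ‖Δ (Δ fun y => WithLp.toLp 2 fun i => U i y) x‖ = ‖WithLp.toLp 2 fun i => U i x‖ ^ s := by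
  have hnonneg : 0 ≤ vnorm U x := Real.sqrt_nonneg _
  rw [laplacian_laplacian_toLp_eq_smul hU h, norm_smul, ← vnorm_eq_norm,
    Real.norm_of_nonneg (Real.rpow_nonneg hnonneg _),
    ← Real.rpow_add_one' hnonneg (by rwa [sub_add_cancel]), sub_add_cancel]

theorem exists_tendsto_toLp_of_bilap_eq (hn : 5 ≤ n) {s : ℝ} (hs : (n : ℝ) / (n - 4) < s)
    {U : Fin p → EuclideanSpace ℝ (Fin n) → ℝ}
    (hU : ∀ᶠ x in 𝓝[≠] 0, ∀ i, ContDiffAt ℝ 4 (U i) x)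
    (hpde : ∀ᶠ x in 𝓝[≠] 0, ∀ i, bilap (U i) x = vnorm U x ^ (s - 1) * U i x)
    (ho : Tendsto (fun x => ‖x‖ ^ (4 / (s - 1)) * vnorm U x) (𝓝[≠] 0) (𝓝 0)) :
    ∃ l, Tendsto (fun x => WithLp.toLp 2 fun i => U i x) (𝓝[≠] 0) (𝓝 l) := by
  have hn' : (5 : ℝ) ≤ n := mod_cast hn
  have hs₀ : 0 < s := (div_pos (by linarith) (by linarith)).trans hs
  simp only [vnorm_eq_norm U] at ho
  refine exists_tendsto_of_isBigO_bilaplacian (s := s) (by rwa [finrank_euclideanSpace_fin])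
    (by rwa [finrank_euclideanSpace_fin]) (hU.mono fun x hx => contDiffAt_euclidean.2 hx)
    (.of_bound' ?_) (isLittleO_norm_rpow_neg ho)
  filter_upwards [hU, hpde] with x hx hx'
  exact (norm_laplacian_laplacian_toLp hs₀.ne' hx hx').trans_le (le_abs_self _)

theorem nhdsWithin_sdiff_singleton_of_mem_nhds {X : Type*} [TopologicalSpace X] {s : Set X} {a : X}
    (hs : s ∈ 𝓝 a) : 𝓝[s \ {a}] a = 𝓝[≠] a :=
  nhdsWithin_inter_of_mem (nhdsWithin_le_nhds hs)

theorem exists_continuousOn_extension {X Y : Type*} [TopologicalSpace X] [T1Space X]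
    [TopologicalSpace Y] {s : Set X} {a : X} {f : X → Y} {l : Y}
    (hf : ContinuousOn f (s \ {a})) (hl : Tendsto f (𝓝[≠] a) (𝓝 l)) :
    ∃ g, ContinuousOn g s ∧ ∀ x ∈ s \ {a}, g x = f x := by
  classical
  refine ⟨Function.update f a l, continuousOn_update_iff.2 ⟨hf, fun _ => ?_⟩,
    fun x hx => Function.update_of_ne hx.2 _ _⟩
  exact hl.mono_left (nhdsWithin_mono a fun x hx => hx.2)

theorem statement18_general (hn : 5 ≤ n) {s : ℝ} (hs : (n : ℝ) / (n - 4) < s)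
    {Ω : Set (EuclideanSpace ℝ (Fin n))} (hΩ : IsOpen Ω) (h0 : 0 ∈ Ω)
    {U : Fin p → EuclideanSpace ℝ (Fin n) → ℝ} (hU : ∀ i, ContDiffOn ℝ 4 (U i) (Ω \ {0}))
    (hpde : ∀ i, ∀ x ∈ Ω \ {0}, bilap (U i) x = vnorm U x ^ (s - 1) * U i x)
    (ho : Tendsto (fun x => ‖x‖ ^ (4 / (s - 1)) * vnorm U x) (𝓝[Ω \ {0}] 0) (𝓝 0)) (i : Fin p) :
    ∃ g, ContinuousOn g Ω ∧ ∀ x ∈ Ω \ {0}, g x = U i x := by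
  have hpunct : IsOpen (Ω \ {0}) := hΩ.sdiff isClosed_singleton
  have hnear : 𝓝[Ω \ {0}] 0 = 𝓝[≠] 0 := nhdsWithin_sdiff_singleton_of_mem_nhds (hΩ.mem_nhds h0)
  rw [hnear] at ho
  obtain ⟨l, hl⟩ := exists_tendsto_toLp_of_bilap_eq hn hs
    (hnear ▸ eventually_nhdsWithin_of_forall fun x hx i =>
      (hU i).contDiffAt (hpunct.mem_nhds hx))
    (hnear ▸ eventually_nhdsWithin_of_forall fun x hx i => hpde i x hx) ho
  exact exists_continuousOn_extension (hU i).continuousOn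
    (((EuclideanSpace.proj i : _ →L[ℝ] ℝ).continuous.tendsto l).comp hl)

end Coordinates

/-- removability of the singularity in the Gidas–Spruck range
`n/(n-4) < s < (n+4)/(n-4)` when `|U(x)| = o(|x|^{-4/(s-1)})` as `x → 0`. -/
theorem statement18 (n p : ℕ) (hn : 5 ≤ n) (hp : 1 ≤ p) (s : ℝ)
    (hs1 : (n : ℝ) / ((n : ℝ) - 4) < s) (hs2 : s < ((n : ℝ) + 4) / ((n : ℝ) - 4))
    (U : Fin p → EuclideanSpace ℝ (Fin n) → ℝ)
    (hnonneg : ∀ i, ∀ x ∈ Metric.ball (0 : EuclideanSpace ℝ (Fin n)) 1 \ {0}, 0 ≤ U i x)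
    (hC4 : ∀ i, ContDiffOn ℝ 4 (U i)
      (Metric.ball (0 : EuclideanSpace ℝ (Fin n)) 1 \ {0}))
    (hsuper : ∀ i, ∀ x ∈ Metric.ball (0 : EuclideanSpace ℝ (Fin n)) 1 \ {0},
      0 < -lap (U i) x)
    (hpde : ∀ i, ∀ x ∈ Metric.ball (0 : EuclideanSpace ℝ (Fin n)) 1 \ {0},
      bilap (U i) x = (vnorm U x) ^ (s - 1) * U i x)
    (hlittleo : Tendsto
      (fun x : EuclideanSpace ℝ (Fin n) => ‖x‖ ^ (4 / (s - 1)) * vnorm U x)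
      (𝓝[Metric.ball (0 : EuclideanSpace ℝ (Fin n)) 1 \ {0}] 0) (𝓝 0)) :
    ∀ i, ∃ g : EuclideanSpace ℝ (Fin n) → ℝ,
      ContinuousOn g (Metric.ball (0 : EuclideanSpace ℝ (Fin n)) 1) ∧
      ∀ x ∈ Metric.ball (0 : EuclideanSpace ℝ (Fin n)) 1 \ {0}, g x = U i x := by
  exact statement18_general hn hs1 isOpen_ball (mem_ball_self one_pos) hC4 hpde hlittleo
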